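/- arXiv:1710.00070 — 2 statements merged into one kernel-verified Lean document; each statement's English description precedes it below -/
import Mathlib

section
/- Let n ∈ ω and let R be a Σ^0_{n+2} open subset of (ω)^2 (given by a computable Borel code for a Σ^0_{n+2} set) with complement also of this form, such that (ω)^2 = R ∪ ¬R. Then there is either an infinite partition x ∈ (ω)^ω computable from ∅^{(n)} with (x)^2 ⊆ ¬R, or an infinite partition x computable from ∅^{(n+1)} with (x)^2 ⊆ R. -/
open Set

/-- `f : ℕ → ℕ` is ordered: a value `i` can occur only after all `j < i` have occurred. -/
def IsOrderedFn (f : ℕ → ℕ) : Prop :=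
  ∀ n i, f n = i → ∀ j < i, ∃ m < n, f m = j

/-- `(ω)^k`: ordered surjections from `ω` onto `k`. -/
def OmegaPart (k : ℕ) : Set (ℕ → ℕ) :=
  {f | IsOrderedFn f ∧ (∀ n, f n < k) ∧ ∀ i < k, ∃ n, f n = i}

/-- `(ω)^ω`: ordered surjections from `ω` onto `ω` (infinite partitions). -/
def OmegaPartInf : Set (ℕ → ℕ) :=
  {f | IsOrderedFn f ∧ Function.Surjective f}

/-- `(p)^k`: the `k`-coarsenings of `p`. -/
def Coarsenings (p : ℕ → ℕ) (k : ℕ) : Set (ℕ → ℕ) :=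
  {q | q ∈ OmegaPart k ∧ ∀ n m, p n = p m → q n = q m}

/-- `(p)^ω`: the infinite coarsenings of `p`. -/
def CoarseningsInf (p : ℕ → ℕ) : Set (ℕ → ℕ) :=
  {q | q ∈ OmegaPartInf ∧ ∀ n m, p n = p m → q n = q m}

/-- `μ^x(i)`: the least `n` with `x n = i`. -/
noncomputable def mu (x : ℕ → ℕ) (i : ℕ) : ℕ := sInf {n | x n = i}

/-- `x ↾ n` as a finite string. -/
def restrictList (x : ℕ → ℕ) (n : ℕ) : List ℕ := (List.range n).map x

/-- The basic (cylinder) set `[σ]` of functions extending the finite string `σ`. -/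
def Cyl (σ : List ℕ) : Set (ℕ → ℕ) := {x | ∀ n < σ.length, x n = σ.getD n 0}

/-- A finite string is ordered. -/
def ListOrdered (σ : List ℕ) : Prop :=
  ∀ n < σ.length, ∀ j < σ.getD n 0, ∃ m < n, σ.getD m 0 = j

/-- `(ω)^k_fin`: ordered finite strings over `k` in which all `i < k` appear. -/
def OmegaPartFin (k : ℕ) : Set (List ℕ) :=
  {σ | ListOrdered σ ∧ (∀ a ∈ σ, a < k) ∧ ∀ i < k, i ∈ σ}

/-- Composition `σ ∘ τ` of finite strings: `(σ ∘ τ)(n) = σ(τ(n))`. -/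
def listComp (σ τ : List ℕ) : List ℕ := τ.map fun n => σ.getD n 0

/-- `σ'` is a `k`-coarsening of the finite string `τ`. -/
def IsListCoarsening (k : ℕ) (σ' τ : List ℕ) : Prop :=
  σ' ∈ OmegaPartFin k ∧ σ'.length = τ.length ∧
    ∀ n < τ.length, ∀ m < τ.length,
      τ.getD n 0 = τ.getD m 0 → σ'.getD n 0 = σ'.getD m 0

/-- The open set coded by a set `W` of finite strings. -/
def OpenFrom (W : Set (List ℕ)) : Set (ℕ → ℕ) := {x | ∃ σ ∈ W, x ∈ Cyl σ}

/-- Codes for partial recursive functionals with an oracle. -/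
inductive OracleCode : Type
  | oracle : OracleCode
  | zero : OracleCode
  | succ : OracleCode
  | left : OracleCode
  | right : OracleCode
  | pair : OracleCode → OracleCode → OracleCode
  | comp : OracleCode → OracleCode → OracleCode
  | prec : OracleCode → OracleCode → OracleCode
  | rfind' : OracleCode → OracleCode

/-- Evaluation of an oracle code with oracle `g`. -/
def OracleCode.evalo (g : ℕ →. ℕ) : OracleCode → ℕ →. ℕ
  | .oracle => g
  | .zero => fun _ => Part.some 0
  | .succ => fun n => Part.some (n + 1)
  | .left => fun n => Part.some (Nat.unpair n).1
  | .right => fun n => Part.some (Nat.unpair n).2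
  | .pair cf cg => fun n => Nat.pair <$> OracleCode.evalo g cf n <*> OracleCode.evalo g cg n
  | .comp cf cg => fun n => OracleCode.evalo g cg n >>= OracleCode.evalo g cf
  | .prec cf cg =>
      Nat.unpaired fun a n =>
        n.rec (OracleCode.evalo g cf a) fun y IH => do
          let i ← IH
          OracleCode.evalo g cg (Nat.pair a (Nat.pair y i))
  | .rfind' cf =>
      Nat.unpaired fun a m =>
        (Nat.rfind fun n =>
            (fun x => decide (x = 0)) <$> OracleCode.evalo g cf (Nat.pair a (n + m))).map (· + m)

/-- View a total function as a partial function. -/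
def toP (f : ℕ → ℕ) : ℕ →. ℕ := fun n => Part.some (f n)

/-- `f` is Turing reducible to `g`. -/
def TuringReducibleFun (f g : ℕ → ℕ) : Prop :=
  ∃ c : OracleCode, c.evalo (toP g) = toP f

open Classical in
/-- Characteristic function of a set of naturals. -/
noncomputable def chi (A : Set ℕ) : ℕ → ℕ := fun n => if n ∈ A then 1 else 0

/-- A numbering of oracle codes. -/
def OracleCode.encodeC : OracleCode → ℕ
  | .oracle => 0
  | .zero => 1
  | .succ => 2
  | .left => 3
  | .right => 4
  | .pair a b => Nat.pair a.encodeC b.encodeC * 4 + 5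
  | .comp a b => Nat.pair a.encodeC b.encodeC * 4 + 6
  | .prec a b => Nat.pair a.encodeC b.encodeC * 4 + 7
  | .rfind' a => a.encodeC * 4 + 8

/-- The Turing jump of (the characteristic function) `g`. -/
def JumpSet (g : ℕ → ℕ) : Set ℕ :=
  {n | ∃ c : OracleCode, ∃ m, n = Nat.pair c.encodeC m ∧ (c.evalo (toP g) m).Dom}

/-- `∅^{(n)}`: the iterated Turing jump of the empty set. -/
noncomputable def EmptyIter : ℕ → Set ℕ
  | 0 => (∅ : Set ℕ)
  | n + 1 => JumpSet (chi (EmptyIter n))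

/-- The clopen set coded by the leaf label `e`: `∅`, `univ`, `[τ_m]`, or its complement. -/
def leafSet (e : ℕ) : Set (ℕ → ℕ) :=
  if e = 0 then ∅
  else if e = 1 then Set.univ
  else if e % 2 = 0 then Cyl (Denumerable.ofNat (List ℕ) (e / 2 - 1))
  else (Cyl (Denumerable.ofNat (List ℕ) (e / 2 - 1)))ᶜ

/-- Evaluation of a normal-form Borel code of height `m` (alternating ∃/∀ over the
labelling function `f` on tuples, `true` for Σ, `false` for Π). -/
def NFEval : ℕ → Bool → (List ℕ → ℕ) → (ℕ → ℕ) → Prop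
  | 0, _, f, x => x ∈ leafSet (f [])
  | m + 1, true, f, x => ∃ t, NFEval m false (fun l => f (t :: l)) x
  | m + 1, false, f, x => ∀ t, NFEval m true (fun l => f (t :: l)) x

/-! ### Computability relative to an oracle -/

namespace OracleCode

/-- Codes of plain partial recursive functions are oracle codes. -/
def ofCode : Nat.Partrec.Code → OracleCode
  | .zero => .zero
  | .succ => .succ
  | .left => .left
  | .right => .right
  | .pair a b => .pair (ofCode a) (ofCode b)
  | .comp a b => .comp (ofCode a) (ofCode b)
  | .prec a b => .prec (ofCode a) (ofCode b)
  | .rfind' a => .rfind' (ofCode a)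

theorem evalo_ofCode (g : ℕ →. ℕ) (c : Nat.Partrec.Code) : (ofCode c).evalo g = c.eval := by
  induction c with
  | zero => rfl
  | succ => rfl
  | left => rfl
  | right => rfl
  | pair a b iha ihb => simp only [ofCode, evalo, Nat.Partrec.Code.eval, iha, ihb]; rfl
  | comp a b iha ihb => simp only [ofCode, evalo, Nat.Partrec.Code.eval, iha, ihb]; rfl
  | prec a b iha ihb => simp only [ofCode, evalo, Nat.Partrec.Code.eval, iha, ihb]; rfl
  | rfind' a iha => simp only [ofCode, evalo, Nat.Partrec.Code.eval, iha]; rfl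

theorem encodeC_injective : Function.Injective encodeC := by
  intro a
  induction a with
  | pair a b iha ihb =>
    intro c h
    cases c <;> simp only [encodeC] at h <;> try omega
    obtain ⟨h₁, h₂⟩ := Nat.pair_eq_pair.1 (Nat.eq_of_mul_eq_mul_right four_pos (Nat.add_right_cancel h))
    rw [iha h₁, ihb h₂]
  | comp a b iha ihb =>
    intro c h
    cases c <;> simp only [encodeC] at h <;> try omega
    obtain ⟨h₁, h₂⟩ := Nat.pair_eq_pair.1 (Nat.eq_of_mul_eq_mul_right four_pos (Nat.add_right_cancel h))
    rw [iha h₁, ihb h₂]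
  | prec a b iha ihb =>
    intro c h
    cases c <;> simp only [encodeC] at h <;> try omega
    obtain ⟨h₁, h₂⟩ := Nat.pair_eq_pair.1 (Nat.eq_of_mul_eq_mul_right four_pos (Nat.add_right_cancel h))
    rw [iha h₁, ihb h₂]
  | rfind' a iha =>
    intro c h
    cases c <;> simp only [encodeC] at h <;> try omega
    rw [iha (Nat.eq_of_mul_eq_mul_right four_pos (Nat.add_right_cancel h))]
  | _ =>
    intro c h
    cases c <;> simp only [encodeC] at h <;> first | rfl | omega

end OracleCode

theorem chi_eq_chi {A B : Set ℕ} {a b : ℕ} (h : a ∈ A ↔ b ∈ B) : chi A a = chi B b := by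
  by_cases hb : b ∈ B
  · simp [chi, hb, h.2 hb]
  · simp [chi, hb, mt h.1 hb]

theorem chi_eq_zero {A : Set ℕ} {a : ℕ} : chi A a = 0 ↔ a ∉ A := by
  simp [chi]

namespace TuringReducibleFun

variable {f h g : ℕ → ℕ}

theorem of_computable (hf : Computable f) : TuringReducibleFun f g := by
  obtain ⟨c, hc⟩ := Nat.Partrec.Code.exists_code.1 (Partrec.nat_iff.1 hf.partrec)
  exact ⟨OracleCode.ofCode c, by rw [OracleCode.evalo_ofCode, hc]; rfl⟩

theorem oracle : TuringReducibleFun g g := ⟨.oracle, rfl⟩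

theorem comp (hf : TuringReducibleFun f g) (hh : TuringReducibleFun h g) :
    TuringReducibleFun (fun n => f (h n)) g := by
  obtain ⟨c, hc⟩ := hf
  obtain ⟨d, hd⟩ := hh
  refine ⟨.comp c d, funext fun n => ?_⟩
  simp only [OracleCode.evalo, hc, hd]
  exact Part.bind_some _ _

theorem pair (hf : TuringReducibleFun f g) (hh : TuringReducibleFun h g) :
    TuringReducibleFun (fun n => Nat.pair (f n) (h n)) g := by
  obtain ⟨c, hc⟩ := hf
  obtain ⟨d, hd⟩ := hh
  refine ⟨.pair c d, funext fun n => ?_⟩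
  simp [OracleCode.evalo, hc, hd, toP, Seq.seq]

theorem iterate (hf : TuringReducibleFun f g) (a : ℕ) :
    TuringReducibleFun (fun n => n.rec a fun m s => f (Nat.pair m s)) g := by
  obtain ⟨c, hc⟩ := hf.comp (of_computable (f := fun n => n.unpair.2)
    (Computable.snd.comp Computable.unpair))
  obtain ⟨d, hd⟩ := of_computable (g := g) (f := fun _ => a) (Computable.const a)
  have key : TuringReducibleFun
      (fun n => n.unpair.2.rec a fun m s => f (Nat.pair m s)) g := by
    refine ⟨.prec d c, funext fun n => ?_⟩
    simp only [OracleCode.evalo, hc, hd, toP, Nat.unpaired]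
    induction n.unpair.2 with
    | zero => rfl
    | succ m ih =>
      simp only [ih]
      exact (Part.bind_some _ _).trans (by simp)
  have := key.comp (of_computable (f := fun n => Nat.pair 0 n)
    (Primrec₂.natPair.comp (Primrec.const 0) Primrec.id).to_comp)
  simpa using this

theorem rfind_code (c : OracleCode) (hc : c.evalo (toP g) = toP f) (a : ℕ) :
    (OracleCode.rfind' c).evalo (toP g) (Nat.pair a 0) =
      Nat.rfind fun n => Part.some (decide (f (Nat.pair a n) = 0)) := by
  simp [OracleCode.evalo, hc, toP, Part.map_id']

theorem find (hf : TuringReducibleFun f g) (H : ∀ a, ∃ n, f (Nat.pair a n) = 0) :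
    TuringReducibleFun (fun a => Nat.find (H a)) g := by
  obtain ⟨c, hc⟩ := hf
  obtain ⟨d, hd⟩ := of_computable (g := g) (f := fun n => Nat.pair n 0)
    (Primrec₂.natPair.comp Primrec.id (Primrec.const 0)).to_comp
  refine ⟨.comp (.rfind' c) d, funext fun a => ?_⟩
  have : (OracleCode.comp (.rfind' c) d).evalo (toP g) a =
      (OracleCode.rfind' c).evalo (toP g) (Nat.pair a 0) := by
    simp [OracleCode.evalo, hd, toP]
  rw [this, rfind_code c hc]
  refine Part.eq_some_iff.2 (Nat.mem_rfind.2 ⟨?_, fun {m} hm => ?_⟩)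
  · simpa using Nat.find_spec (H a)
  · simpa using Nat.find_min (H a) hm

theorem exists_jump (hf : TuringReducibleFun f g) :
    TuringReducibleFun (chi {a | ∃ n, f (Nat.pair a n) = 0}) (chi (JumpSet g)) := by
  obtain ⟨c, hc⟩ := hf
  have key : ∀ a, chi {a | ∃ n, f (Nat.pair a n) = 0} a =
      chi (JumpSet g) (Nat.pair (OracleCode.rfind' c).encodeC (Nat.pair a 0)) := by
    intro a
    have : (∃ n, f (Nat.pair a n) = 0) ↔
        Nat.pair (OracleCode.rfind' c).encodeC (Nat.pair a 0) ∈ JumpSet g := by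
      constructor
      · rintro ⟨n, hn⟩
        refine ⟨_, _, rfl, ?_⟩
        rw [rfind_code c hc]
        exact Nat.rfind_dom.2 ⟨n, by simpa using hn, fun _ => trivial⟩
      · rintro ⟨d, m, hdm, hdom⟩
        obtain ⟨h₁, rfl⟩ := Nat.pair_eq_pair.1 hdm
        rw [← OracleCode.encodeC_injective h₁, rfind_code c hc] at hdom
        obtain ⟨n, hn, -⟩ := Nat.rfind_dom.1 hdom
        exact ⟨n, by simpa using hn⟩
    exact chi_eq_chi this
  rw [funext key]
  exact oracle.comp (of_computable (Primrec₂.natPair.comp (Primrec.const _)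
    (Primrec₂.natPair.comp Primrec.id (Primrec.const 0))).to_comp)

end TuringReducibleFun

/-- `f` is computable relative to `g`, for functions between coded types. -/
def ComputableRel {α β : Type} [Primcodable α] [Primcodable β] (g : ℕ → ℕ) (f : α → β) : Prop :=
  ∃ F, TuringReducibleFun F g ∧ ∀ a, F (Encodable.encode a) = Encodable.encode (f a)

/-- `P` is decidable relative to `g`. -/
def DecidableRelTo {α : Type} [Primcodable α] (g : ℕ → ℕ) (P : α → Prop) : Prop :=
  ∃ F, TuringReducibleFun F g ∧ ∀ a, F (Encodable.encode a) = 0 ↔ P a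

section Rel

variable {α β γ : Type} [Primcodable α] [Primcodable β] [Primcodable γ] {g : ℕ → ℕ}

namespace ComputableRel

theorem of_computable {f : α → β} (hf : Computable f) : ComputableRel g f := by
  refine ⟨fun n => ((Encodable.decode (α := α) n).map fun a => Encodable.encode (f a)).getD 0,
    TuringReducibleFun.of_computable ?_, fun a => by simp⟩
  exact Computable.option_getD (Computable.option_map Computable.decode
    ((Computable.encode.comp hf).comp Computable.snd).to₂) (Computable.const 0)

theorem comp {f : β → γ} {h : α → β} (hf : ComputableRel g f) (hh : ComputableRel g h) :
    ComputableRel g fun a => f (h a) := by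
  obtain ⟨F, hF, hF'⟩ := hf
  obtain ⟨H, hH, hH'⟩ := hh
  exact ⟨_, hF.comp hH, fun a => by rw [hH', hF']⟩

theorem pair {f : α → β} {h : α → γ} (hf : ComputableRel g f) (hh : ComputableRel g h) :
    ComputableRel g fun a => (f a, h a) := by
  obtain ⟨F, hF, hF'⟩ := hf
  obtain ⟨H, hH, hH'⟩ := hh
  exact ⟨_, hF.pair hH, fun a => by rw [hH', hF', Encodable.encode_prod_val]⟩

theorem iterate {f : ℕ × α → α} (hf : ComputableRel g f) (a : α) :
    ComputableRel g fun n : ℕ => (n.rec a fun m s => f (m, s) : α) := by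
  obtain ⟨F, hF, hF'⟩ := hf
  refine ⟨_, hF.iterate (Encodable.encode a), fun n => ?_⟩
  rw [Encodable.encode_nat]
  induction n with
  | zero => rfl
  | succ m ih =>
    simp only [ih]
    rw [← hF', Encodable.encode_prod_val, Encodable.encode_nat]

theorem turingReducibleFun {f : ℕ → ℕ} (hf : ComputableRel g f) : TuringReducibleFun f g := by
  obtain ⟨F, hF, hF'⟩ := hf
  rwa [show f = F from funext fun n => (hF' n).symm]

end ComputableRel

theorem computable_decode_getD (α : Type) [Primcodable α] [Inhabited α] :
    Computable fun n : ℕ => (Encodable.decode (α := α) n).getD default :=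
  Computable.option_getD Computable.decode (Computable.const default)

namespace DecidableRelTo

theorem of_computable {p : α → Bool} (hp : Computable p) : DecidableRelTo g fun a => p a = true := by
  obtain ⟨F, hF, hF'⟩ := ComputableRel.of_computable (g := g)
    (Computable.cond hp (Computable.const 0) (Computable.const (1 : ℕ)))
  exact ⟨F, hF, fun a => by rw [hF']; cases h : p a <;> simp [h]⟩

theorem of_primrecPred {P : α → Prop} (hP : PrimrecPred P) : DecidableRelTo g P := by
  obtain ⟨_, hP⟩ := hP
  simpa using of_computable (g := g) hP.to_comp

theorem comp {P : β → Prop} {h : α → β} (hP : DecidableRelTo g P) (hh : Computable h) :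
    DecidableRelTo g fun a => P (h a) := by
  obtain ⟨F, hF, hF'⟩ := hP
  obtain ⟨H, hH, hH'⟩ := ComputableRel.of_computable (g := g) hh
  exact ⟨_, hF.comp hH, fun a => by rw [hH', hF']⟩

theorem not {P : α → Prop} (hP : DecidableRelTo g P) : DecidableRelTo g fun a => ¬ P a := by
  obtain ⟨F, hF, hF'⟩ := hP
  refine ⟨_, (TuringReducibleFun.of_computable (f := fun n => 1 - n)
    (Primrec.nat_sub.comp (Primrec.const 1) Primrec.id).to_comp).comp hF, fun a => ?_⟩
  have := hF' a
  change 1 - _ = 0 ↔ ¬ P a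
  rw [← this]
  omega

theorem and {P Q : α → Prop} (hP : DecidableRelTo g P) (hQ : DecidableRelTo g Q) :
    DecidableRelTo g fun a => P a ∧ Q a := by
  obtain ⟨F, hF, hF'⟩ := hP
  obtain ⟨G, hG, hG'⟩ := hQ
  refine ⟨_, (TuringReducibleFun.of_computable (f := fun n => n.unpair.1 + n.unpair.2)
    (Primrec.nat_add.comp (Primrec.fst.comp Primrec.unpair)
      (Primrec.snd.comp Primrec.unpair)).to_comp).comp (hF.pair hG), fun a => ?_⟩
  change _ ↔ P a ∧ Q a
  rw [← hF', ← hG']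
  simp

theorem or {P Q : α → Prop} (hP : DecidableRelTo g P) (hQ : DecidableRelTo g Q) :
    DecidableRelTo g fun a => P a ∨ Q a := by
  simpa only [not_and_or, not_not] using (hP.not.and hQ.not).not

/-- A total search through a decidable relation is computable. -/
theorem exists_choice [Inhabited α] [Inhabited β] {P : α × β → Prop} (hP : DecidableRelTo g P)
    (H : ∀ a, ∃ b, P (a, b)) : ∃ f : α → β, ComputableRel g f ∧ ∀ a, P (a, f a) := by
  obtain ⟨F, hF, hF'⟩ := hP.comp (h := fun q : ℕ × ℕ =>
    ((Encodable.decode (α := α) q.1).getD default, (Encodable.decode (α := β) q.2).getD default))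
    (((computable_decode_getD α).comp Computable.fst).pair
      ((computable_decode_getD β).comp Computable.snd))
  have hF'' : ∀ m n, F (Nat.pair m n) = 0 ↔ P ((Encodable.decode (α := α) m).getD default,
      (Encodable.decode (α := β) n).getD default) := fun m n => hF' (m, n)
  have H' : ∀ m, ∃ n, F (Nat.pair m n) = 0 := by
    intro m
    obtain ⟨b, hb⟩ := H ((Encodable.decode (α := α) m).getD default)
    exact ⟨Encodable.encode b, by rw [hF'']; simpa using hb⟩
  refine ⟨fun a => (Encodable.decode (α := β) (Nat.find (H' (Encodable.encode a)))).getD default,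
    ?_, fun a => ?_⟩
  · exact (ComputableRel.of_computable (computable_decode_getD β)).comp
      ⟨_, hF.find H', fun _ => rfl⟩
  · simpa using (hF'' _ _).1 (Nat.find_spec (H' (Encodable.encode a)))

theorem exists_jump [Inhabited β] {P : α × β → Prop} (hP : DecidableRelTo g P) :
    DecidableRelTo (chi (JumpSet g)) fun a => ∃ b, P (a, b) := by
  obtain ⟨F, hF, hF'⟩ := hP.comp (h := fun q : α × ℕ =>
    (q.1, (Encodable.decode (α := β) q.2).getD default))
    (Computable.fst.pair ((computable_decode_getD β).comp Computable.snd))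
  have hF'' : ∀ a n, F (Nat.pair (Encodable.encode a) n) = 0 ↔
      P (a, (Encodable.decode (α := β) n).getD default) := fun a n => hF' (a, n)
  have key : DecidableRelTo (chi (JumpSet g)) fun a : α => ¬ ∃ b, P (a, b) := by
    refine ⟨_, hF.exists_jump, fun a => ?_⟩
    have : (∃ n, F (Nat.pair (Encodable.encode a) n) = 0) ↔ ∃ b, P (a, b) :=
      ⟨fun ⟨n, hn⟩ => ⟨_, (hF'' a n).1 hn⟩,
        fun ⟨b, hb⟩ => ⟨Encodable.encode b, by rw [hF'']; simpa using hb⟩⟩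
    exact chi_eq_zero.trans (not_congr this)
  simpa only [not_not] using key.not

theorem jump {P : α → Prop} (hP : DecidableRelTo g P) : DecidableRelTo (chi (JumpSet g)) P := by
  simpa using (hP.comp (h := fun q : α × Unit => q.1) Computable.fst).exists_jump

end DecidableRelTo

end Rel

/-! ### Schedule of the construction

Stage `2 ^ k + u` with `u < 2 ^ k` deals with the colouring of the blocks `1, …, k` given by the
binary digits of `u`; for `u = 0` it creates the new block `k`. -/

/-- The colouring (as a bit mask) treated at stage `r`. -/
def stageMask (r : ℕ) : ℕ := r - 2 ^ Nat.log 2 r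

/-- The requirement treated at stage `r`. -/
def stageReq (r : ℕ) : ℕ := if stageMask r = 0 then 0 else (Nat.log 2 r).unpair.1 + 1

/-- The block which receives colour `true` at stage `r`. -/
def stageBlock (r : ℕ) : ℕ :=
  if stageMask r = 0 then Nat.log 2 r else Nat.log 2 (stageMask r) + 1

/-- The colour of block `v` at stage `r`. -/
def stageColor (r v : ℕ) : Bool := decide (2 * stageMask r / 2 ^ v % 2 = 1)

theorem stageColor_zero (r : ℕ) : stageColor r 0 = false := by
  simp [stageColor]

theorem stageColor_succ (r v : ℕ) : stageColor r (v + 1) = (stageMask r).testBit v := by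
  rw [stageColor, Nat.testBit_eq_decide_div_mod_eq, pow_succ', Nat.mul_div_mul_left _ _ two_pos]

theorem stageColor_of_mask {r : ℕ} (h : stageMask r = 0) (v : ℕ) : stageColor r v = false := by
  simp [stageColor, h]

theorem log_two_pow_add {k u : ℕ} (h : u < 2 ^ k) : Nat.log 2 (2 ^ k + u) = k :=
  (Nat.log_eq_iff (Or.inr ⟨one_lt_two, by positivity⟩)).2 ⟨by omega, by rw [pow_succ]; omega⟩

theorem stageMask_two_pow_add {k u : ℕ} (h : u < 2 ^ k) : stageMask (2 ^ k + u) = u := by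
  simp [stageMask, log_two_pow_add h]

theorem exists_eq_two_pow_add {r : ℕ} (hr : r ≠ 0) : ∃ k, ∃ u < 2 ^ k, r = 2 ^ k + u := by
  refine ⟨Nat.log 2 r, r - 2 ^ Nat.log 2 r, ?_, ?_⟩
  · have := Nat.lt_pow_succ_log_self one_lt_two r
    rw [Nat.succ_eq_add_one, pow_succ] at this
    have := Nat.pow_log_le_self 2 hr
    omega
  · have := Nat.pow_log_le_self 2 hr
    omega

theorem stageBlock_two_pow (k : ℕ) : stageBlock (2 ^ k) = k := by
  have h := stageMask_two_pow_add (k := k) (u := 0) (by positivity)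
  have h' := log_two_pow_add (k := k) (u := 0) (by positivity)
  rw [add_zero] at h h'
  simp [stageBlock, h, h']

theorem stageBlock_two_pow_add {k u : ℕ} (hu : u ≠ 0) (h : u < 2 ^ k) :
    stageBlock (2 ^ k + u) = Nat.log 2 u + 1 := by
  simp [stageBlock, stageMask_two_pow_add h, hu]

theorem log_two_pow_sub_one (k : ℕ) : Nat.log 2 (2 ^ (k + 1) - 1) = k := by
  have : 2 ^ (k + 1) - 1 = 2 ^ k + (2 ^ k - 1) := by
    have : 0 < 2 ^ k := by positivity
    rw [pow_succ]; omega
  rw [this, log_two_pow_add (by have : 0 < 2 ^ k := by positivity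
                                omega)]

theorem primrec_two_pow : Primrec fun k : ℕ => 2 ^ k :=
  (Primrec₂.unpaired'.1 Nat.Primrec.pow).comp (Primrec.const 2) Primrec.id

theorem primrec_log_two : Primrec (Nat.log 2) := by
  have : Primrec fun r : ℕ => Nat.findGreatest (fun k => 2 ^ k ≤ r) r :=
    Primrec.nat_findGreatest Primrec.id
      (Primrec.nat_le.comp (primrec_two_pow.comp Primrec.snd) Primrec.fst)
  refine this.of_eq fun r => ?_
  rw [Nat.findGreatest_eq_iff]
  refine ⟨Nat.log_le_self 2 r, fun h => Nat.pow_log_le_self 2 ?_, fun k hk _ hle => ?_⟩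
  · rintro rfl
    simp at h
  · exact absurd (Nat.le_log_of_pow_le one_lt_two hle) (by omega)

theorem primrec_stageMask : Primrec stageMask :=
  Primrec.nat_sub.comp Primrec.id (primrec_two_pow.comp primrec_log_two)

theorem primrec_stageReq : Primrec stageReq :=
  Primrec.ite (Primrec.eq.comp primrec_stageMask (Primrec.const 0)) (Primrec.const 0)
    (Primrec.succ.comp (Primrec.fst.comp (Primrec.unpair.comp primrec_log_two)))

theorem primrec_stageBlock : Primrec stageBlock :=
  Primrec.ite (Primrec.eq.comp primrec_stageMask (Primrec.const 0)) primrec_log_two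
    (Primrec.succ.comp (primrec_log_two.comp primrec_stageMask))

theorem primrec_stageColor : Primrec₂ stageColor := by
  have : PrimrecRel fun r v : ℕ => 2 * stageMask r / 2 ^ v % 2 = 1 :=
    Primrec.eq.comp (Primrec.nat_mod.comp (Primrec.nat_div.comp
      (Primrec.nat_mul.comp (Primrec.const 2) (primrec_stageMask.comp Primrec.fst))
      (primrec_two_pow.comp Primrec.snd)) (Primrec.const 2)) (Primrec.const 1)
  exact this.decide

/-! ### Partitions built in stages -/

/-- The finite binary string `ρ` is an initial segment of `y`. -/
def IsInitial (ρ : List Bool) (y : ℕ → ℕ) : Prop :=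
  ∀ i < ρ.length, y i = (ρ.getD i false).toNat

/-- `S` is a sequence of approximations to a partition which at each stage `m` is extended
according to the binary string `τ m`. -/
structure IsStaged (S : ℕ → List ℕ) (τ : ℕ → List Bool) : Prop where
  zero : S 0 = [0]
  succ : ∀ m, S (m + 1) = S m ++ (τ m).map (fun b => bif b then stageBlock (m + 2) else 0) ++ [0]
  mem_of_mask : ∀ m, stageMask (m + 2) = 0 → true ∈ τ m

namespace IsStaged

variable {S : ℕ → List ℕ} {τ : ℕ → List Bool}

theorem lt_length (h : IsStaged S τ) (m : ℕ) : m < (S m).length := by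
  induction m with
  | zero => simp [h.zero]
  | succ m ih => simp only [h.succ, List.length_append, List.length_singleton]; omega

theorem prefix_of_le (h : IsStaged S τ) {m k : ℕ} (hmk : m ≤ k) : S m <+: S k := by
  induction k, hmk using Nat.le_induction with
  | base => exact List.prefix_rfl
  | succ k _ ih =>
    rw [h.succ, List.append_assoc]
    exact ih.trans (List.prefix_append _ _)

theorem mem_succ (h : IsStaged S τ) (m v : ℕ) : v ∈ S (m + 1) ↔
    v ∈ S m ∨ (v = stageBlock (m + 2) ∧ true ∈ τ m) ∨ v = 0 := by
  rw [h.succ]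
  simp only [List.mem_append, List.mem_map, List.mem_singleton, Bool.exists_bool, cond_false,
    cond_true]
  have : v = 0 → (v ∈ S m) := by
    rintro rfl
    exact (h.prefix_of_le (Nat.zero_le m)).subset (by simp [h.zero])
  grind

theorem mem_iff (h : IsStaged S τ) (m v : ℕ) : v ∈ S m ↔ v ≤ Nat.log 2 (m + 1) := by
  induction m generalizing v with
  | zero => simp [h.zero]
  | succ m ih =>
    rw [h.mem_succ, ih]
    obtain ⟨k, u, hu, hk⟩ := exists_eq_two_pow_add (r := m + 2) (by omega)
    rw [show m + 1 + 1 = m + 2 from rfl]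
    rcases Nat.eq_zero_or_pos u with rfl | hu0
    · have htrue := h.mem_of_mask m (by rw [hk, stageMask_two_pow_add hu])
      obtain ⟨k, rfl⟩ : ∃ j, k = j + 1 := Nat.exists_eq_succ_of_ne_zero (by
        rintro rfl
        omega)
      rw [show m + 1 = 2 ^ (k + 1) - 1 by omega, hk, log_two_pow_sub_one, log_two_pow_add hu,
        add_zero, stageBlock_two_pow]
      simp only [htrue, and_true]
      omega
    · rw [show m + 1 = 2 ^ k + (u - 1) by omega, hk, log_two_pow_add (by omega),
        log_two_pow_add hu, stageBlock_two_pow_add hu0.ne' hu]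
      have := Nat.log_lt_of_lt_pow hu0.ne' hu
      omega

theorem stageBlock_le (m : ℕ) : stageBlock (m + 2) ≤ Nat.log 2 (m + 1) + 1 := by
  obtain ⟨k, u, hu, hk⟩ := exists_eq_two_pow_add (r := m + 2) (by omega)
  rcases Nat.eq_zero_or_pos u with rfl | hu0
  · obtain ⟨k, rfl⟩ : ∃ j, k = j + 1 := Nat.exists_eq_succ_of_ne_zero (by
      rintro rfl
      omega)
    rw [show m + 1 = 2 ^ (k + 1) - 1 by omega, hk, log_two_pow_sub_one, add_zero,
      stageBlock_two_pow]
  · rw [show m + 1 = 2 ^ k + (u - 1) by omega, hk, log_two_pow_add (by omega),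
      stageBlock_two_pow_add hu0.ne' hu]
    have := Nat.log_lt_of_lt_pow hu0.ne' hu
    omega

theorem listOrdered (h : IsStaged S τ) (m : ℕ) : ListOrdered (S m) := by
  induction m with
  | zero =>
    intro n hn j hj
    have : n = 0 := by simpa [h.zero] using hn
    subst this
    simp [h.zero] at hj
  | succ m ih =>
    have hsucc := h.succ m
    rw [List.append_assoc] at hsucc
    intro n hn j hj
    rw [hsucc] at hn hj ⊢
    by_cases hlt : n < (S m).length
    · rw [List.getD_append _ _ _ _ hlt] at hj
      obtain ⟨l, hl, hlj⟩ := ih n hlt j hj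
      exact ⟨l, hl, by rw [List.getD_append _ _ _ _ (hl.trans hlt), hlj]⟩
    · rw [List.getD_append_right _ _ _ _ (by omega)] at hj
      have hjle : j ≤ Nat.log 2 (m + 1) := by
        rw [List.length_append] at hn
        rw [List.getD_eq_getElem _ _ (by omega)] at hj
        have hmem := List.getElem_mem (l := (τ m).map (fun b => bif b then stageBlock (m + 2) else 0)
          ++ [0]) (n := n - (S m).length) (by omega)
        simp only [List.mem_append, List.mem_map, List.mem_singleton, Bool.exists_bool, cond_false,
          cond_true] at hmem
        have := stageBlock_le m
        omega
      obtain ⟨l, hl, hlj⟩ := List.mem_iff_getElem.1 ((h.mem_iff m j).2 hjle)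
      exact ⟨l, by omega, by rw [List.getD_append _ _ _ _ hl, List.getD_eq_getElem _ _ hl, hlj]⟩

theorem limit_eq (h : IsStaged S τ) {m n : ℕ} (hn : n < (S m).length) :
    (S n).getD n 0 = (S m).getD n 0 := by
  rcases le_total m n with hmn | hmn
  · obtain ⟨t, ht⟩ := h.prefix_of_le hmn
    rw [← ht, List.getD_append _ _ _ _ hn]
  · obtain ⟨t, ht⟩ := h.prefix_of_le hmn
    rw [← ht, List.getD_append _ _ _ _ (h.lt_length n)]

theorem limit_mem (h : IsStaged S τ) : (fun n => (S n).getD n 0) ∈ OmegaPartInf := by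
  refine ⟨fun n i hi j hj => ?_, fun v => ?_⟩
  · subst hi
    obtain ⟨l, hl, hlj⟩ := h.listOrdered n n (h.lt_length n) j hj
    exact ⟨l, hl, by rw [← hlj]; exact h.limit_eq (hl.trans (h.lt_length n))⟩
  · have hv : v ∈ S (2 ^ v) := by
      rw [h.mem_iff]
      exact Nat.le_log_of_pow_le one_lt_two (by omega)
    obtain ⟨l, hl, hlv⟩ := List.mem_iff_getElem.1 hv
    exact ⟨l, by
      rw [← hlv, ← List.getD_eq_getElem _ 0 hl]
      exact h.limit_eq hl⟩

/-- If a colouring of the blocks agrees with the one treated at stage `m`, then the string chosen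
at that stage is an initial segment of the coloured limit. -/
theorem isInitial (h : IsStaged S τ) {y : ℕ → ℕ} {c : ℕ → Bool}
    (hy : ∀ n, y n = (c ((S n).getD n 0)).toNat) (hc : c 0 = false) (m : ℕ)
    (hcm : ∀ v ∈ S m, c v = stageColor (m + 2) v) (hblock : c (stageBlock (m + 2)) = true) :
    IsInitial ((S m).map (stageColor (m + 2)) ++ τ m) y := by
  have key : (S m).map (stageColor (m + 2)) ++ τ m ++ [false] = (S (m + 1)).map c := by
    rw [h.succ]
    simp only [List.map_append, List.map_map, List.map_cons, List.map_nil, hc]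
    congr 2
    · exact List.map_congr_left fun v hv => (hcm v hv).symm
    · conv_lhs => rw [← List.map_id (τ m)]
      refine List.map_congr_left fun b _ => ?_
      cases b <;> simp [hc, hblock]
  intro i hi
  have hi' : i < (S (m + 1)).length := by
    have := congrArg List.length key
    simp only [List.length_append, List.length_map, List.length_singleton] at this hi
    omega
  rw [hy, h.limit_eq hi', ← List.getD_append _ [false] _ _ hi, key,
    List.getD_eq_getElem _ _ hi', List.getD_eq_getElem _ _ (by simpa using hi')]
  simp

end IsStaged

/-- A coarsening of a partition into two classes is a colouring of the blocks. -/
theorem exists_color_of_coarsening {x y : ℕ → ℕ} (hx : x ∈ OmegaPartInf)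
    (hy : y ∈ Coarsenings x 2) : ∃ c : ℕ → Bool,
      (∀ n, y n = (c (x n)).toNat) ∧ c 0 = false ∧ ∃ j, c j = true := by
  obtain ⟨⟨hord, hlt, hsurj⟩, hcoarse⟩ := hy
  choose p hp using hx.2
  have hyp : ∀ n, y n = y (p (x n)) := fun n => hcoarse _ _ (hp (x n)).symm
  have hc : ∀ n, y n = (decide (y (p (x n)) = 1)).toNat := by
    intro n
    have := hlt n
    rw [← hyp]
    by_cases h : y n = 1
    · simp [h]
    · simp only [h, decide_false, Bool.toNat_false]
      omega
  refine ⟨fun v => decide (y (p v) = 1), hc, ?_, ?_⟩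
  · have hy0 : y 0 = 0 := by
      by_contra h
      obtain ⟨m, hm, -⟩ := hord 0 _ rfl 0 (Nat.pos_of_ne_zero h)
      omega
    have hx0 : x 0 = 0 := by
      by_contra h
      obtain ⟨m, hm, -⟩ := hx.1 0 _ rfl 0 (Nat.pos_of_ne_zero h)
      omega
    have := hyp 0
    rw [hx0, hy0] at this
    simp [← this]
  · obtain ⟨n, hn⟩ := hsurj 1 one_lt_two
    exact ⟨x n, by simpa using (hyp n).symm.trans hn⟩

/-- If the requirements `D` are dense and decidable relative to `g`, there is a `g`-computable
partition all of whose `2`-coarsenings meet all of them. Requirement `0` need only be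
met by strings which extend a given string of zeros. -/
theorem exists_partition_forall_coarsening {g : ℕ → ℕ} {D : ℕ × ℕ × List Bool → Prop}
    (hD : DecidableRelTo g D) (htrue : ∀ t ρ, D (0, t, ρ) → true ∈ ρ)
    (hzero : ∀ N, ∃ t τ, D (0, t, List.replicate N false ++ τ))
    (hdense : ∀ e σ, ∃ t τ, D (e + 1, t, σ ++ τ)) :
    ∃ x ∈ OmegaPartInf, TuringReducibleFun x g ∧ ∀ y ∈ Coarsenings x 2,
      (∃ t ρ, D (0, t, ρ) ∧ IsInitial ρ y) ∧
        ∀ e N, ∃ t ρ, N ≤ ρ.length ∧ D (e + 1, t, ρ) ∧ IsInitial ρ y := by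
  have hmapColor : Primrec fun q : ℕ × List ℕ => q.2.map (stageColor (q.1 + 2)) :=
    Primrec.list_map Primrec.snd (primrec_stageColor.comp
      (Primrec.nat_add.comp (Primrec.fst.comp Primrec.fst) (Primrec.const 2)) Primrec.snd)
  have hview : ∀ r s, stageMask r = 0 →
      List.map (stageColor r) s = List.replicate s.length false := fun r s h =>
    List.eq_replicate_iff.2 ⟨by simp, by simp [stageColor_of_mask h]⟩
  obtain ⟨f, hf, hfD⟩ := (hD.comp (h := fun q : (ℕ × List ℕ) × (ℕ × List Bool) =>
    (stageReq (q.1.1 + 2), q.2.1, q.1.2.map (stageColor (q.1.1 + 2)) ++ q.2.2))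
    (Primrec.pair (primrec_stageReq.comp (Primrec.nat_add.comp (Primrec.fst.comp Primrec.fst)
      (Primrec.const 2))) (Primrec.pair (Primrec.fst.comp Primrec.snd)
        (Primrec.list_append.comp (hmapColor.comp Primrec.fst)
          (Primrec.snd.comp Primrec.snd)))).to_comp).exists_choice (by
      rintro ⟨m, s⟩
      by_cases h : stageMask (m + 2) = 0
      · obtain ⟨t, τ, ht⟩ := hzero s.length
        exact ⟨(t, τ), by simpa [stageReq, h, hview _ _ h] using ht⟩
      · obtain ⟨t, τ, ht⟩ := hdense (Nat.log 2 (m + 2)).unpair.1 (s.map (stageColor (m + 2)))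
        exact ⟨(t, τ), by simpa [stageReq, h] using ht⟩)
  let step : ℕ × List ℕ → List ℕ := fun q =>
    q.2 ++ (f q).2.map (fun b => bif b then stageBlock (q.1 + 2) else 0) ++ [0]
  have hstep : ComputableRel g step := by
    have : Primrec fun q : (ℕ × List ℕ) × (ℕ × List Bool) => q.1.2 ++ q.2.2.map
        (fun b => bif b then stageBlock (q.1.1 + 2) else 0) ++ [0] :=
      Primrec.list_append.comp (Primrec.list_append.comp (Primrec.snd.comp Primrec.fst)
        (Primrec.list_map (Primrec.snd.comp Primrec.snd) (Primrec.cond Primrec.snd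
          (primrec_stageBlock.comp (Primrec.nat_add.comp
            (Primrec.fst.comp (Primrec.fst.comp Primrec.fst)) (Primrec.const 2)))
          (Primrec.const 0)))) (Primrec.const [0])
    exact (ComputableRel.of_computable this.to_comp).comp
      ((ComputableRel.of_computable Computable.id).pair hf)
  let S : ℕ → List ℕ := fun n => n.rec [0] fun m s => step (m, s)
  let τ : ℕ → List Bool := fun m => (f (m, S m)).2
  have hDm : ∀ m, D (stageReq (m + 2), (f (m, S m)).1,
      (S m).map (stageColor (m + 2)) ++ τ m) := fun m => hfD (m, S m)
  have hS : IsStaged S τ := by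
    refine ⟨rfl, fun m => rfl, fun m hm => ?_⟩
    have h := hDm m
    simp only [stageReq, hm, if_true, hview _ _ hm] at h
    simpa using htrue _ _ h
  have hSc : ComputableRel g fun n : ℕ => (S n).getD n 0 :=
    (ComputableRel.of_computable (f := fun q : List ℕ × ℕ => q.1.getD q.2 0)
      (Primrec.list_getD 0).to_comp).comp
        ((hstep.iterate [0]).pair (ComputableRel.of_computable Computable.id))
  refine ⟨_, hS.limit_mem, hSc.turingReducibleFun, fun y hy => ?_⟩
  obtain ⟨c, hc, hc0, hcex⟩ := exists_color_of_coarsening hS.limit_mem hy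
  classical
  obtain ⟨j, hj, hjmin⟩ : ∃ j, c j = true ∧ ∀ v < j, c v = false :=
    ⟨Nat.find hcex, Nat.find_spec hcex, fun v hv => by simpa using Nat.find_min hcex hv⟩
  obtain ⟨j, rfl⟩ : ∃ i, j = i + 1 := Nat.exists_eq_succ_of_ne_zero (by
    rintro rfl
    simp [hc0] at hj)
  constructor
  · obtain ⟨m, hm⟩ : ∃ m, m + 2 = 2 ^ (j + 1) := ⟨2 ^ (j + 1) - 2, by
      have : 0 < 2 ^ j := by positivity
      rw [pow_succ]
      omega⟩
    have hmask : stageMask (m + 2) = 0 := by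
      rw [hm]
      exact stageMask_two_pow_add (u := 0) (by positivity)
    have h := hDm m
    rw [stageReq, if_pos hmask] at h
    refine ⟨_, _, h, hS.isInitial hc hc0 m (fun v hv => ?_) ?_⟩
    · rw [hS.mem_iff, show m + 1 = 2 ^ (j + 1) - 1 by omega, log_two_pow_sub_one] at hv
      rw [stageColor_of_mask hmask, hjmin v (by omega)]
    · rw [hm, stageBlock_two_pow, hj]
  · intro e N
    let k := Nat.pair e (N + j + 1)
    have hk : N + j + 1 ≤ k := Nat.right_le_pair _ _
    let u := Nat.ofBits fun i : Fin k => c (i + 1)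
    have hu : u < 2 ^ k := Nat.ofBits_lt_two_pow _
    have hbit : ∀ i < k, u.testBit i = c (i + 1) := fun i hi => Nat.testBit_ofBits_lt _ i hi
    have hu0 : u ≠ 0 := by
      intro h
      have := hbit j (by omega)
      rw [h, hj] at this
      simp at this
    have hkk : k < 2 ^ k := Nat.lt_two_pow_self
    obtain ⟨m, hm⟩ : ∃ m, m + 2 = 2 ^ k + u := ⟨2 ^ k + u - 2, by omega⟩
    have hmask : stageMask (m + 2) = u := by
      rw [hm, stageMask_two_pow_add hu]
    have h := hDm m
    rw [stageReq, if_neg (by rwa [hmask]), hm, log_two_pow_add hu, ← hm,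
      show k.unpair.1 = e by simp [k]] at h
    refine ⟨_, _, ?_, h, hS.isInitial hc hc0 m (fun v hv => ?_) ?_⟩
    · have := hS.lt_length m
      simp only [List.length_append, List.length_map]
      omega
    · rw [hS.mem_iff, show m + 1 = 2 ^ k + (u - 1) by omega, log_two_pow_add (by omega)] at hv
      cases v with
      | zero => rw [hc0, stageColor_zero]
      | succ v => rw [stageColor_succ, hmask, hbit v (by omega)]
    · rw [hm, stageBlock_two_pow_add hu0 hu, ← hbit _ (Nat.log_lt_of_lt_pow hu0 hu),
        ← Nat.log2_eq_log_two]
      exact Nat.testBit_log2 hu0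

/-! ### Initial segments -/

theorem IsInitial.exists_append {σ ρ : List Bool} {y : ℕ → ℕ} (hσ : IsInitial σ y)
    (hρ : IsInitial ρ y) (h : σ.length ≤ ρ.length) : ∃ τ, ρ = σ ++ τ := by
  refine ⟨ρ.drop σ.length, ?_⟩
  conv_lhs => rw [← List.take_append_drop σ.length ρ]
  congr 1
  refine List.ext_getElem (by simpa using h) fun i hi hi' => ?_
  have h₁ := hσ i hi'
  have h₂ := hρ i (by omega)
  rw [h₁, List.getD_eq_getElem _ _ hi', List.getD_eq_getElem _ _ (by omega)] at h₂
  rw [List.getElem_take]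
  revert h₂
  cases σ[i] <;> cases ρ[i] <;> simp

theorem exists_isInitial {y : ℕ → ℕ} (hy : ∀ n, y n < 2) (N : ℕ) :
    ∃ ρ, ρ.length = N ∧ IsInitial ρ y := by
  refine ⟨(List.range N).map fun n => decide (y n = 1), by simp, fun i hi => ?_⟩
  have := hy i
  rw [List.getD_eq_getElem _ _ hi]
  by_cases h : y i = 1
  · simp [h]
  · simp [h]
    omega

/-- The string `ρ` starts with `N` zeros and takes the value one later on. -/
def StartsLate (N : ℕ) (ρ : List Bool) : Prop :=
  ∃ τ, ρ = List.replicate N false ++ τ ∧ true ∈ τ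

theorem StartsLate.mem {N : ℕ} {ρ : List Bool} (h : StartsLate N ρ) : true ∈ ρ := by
  obtain ⟨τ, rfl, hτ⟩ := h
  simp [hτ]

theorem StartsLate.append {N : ℕ} {ρ : List Bool} (h : StartsLate N ρ) (τ : List Bool) :
    StartsLate N (ρ ++ τ) := by
  obtain ⟨τ', rfl, hτ'⟩ := h
  exact ⟨τ' ++ τ, by simp, by simp [hτ']⟩

theorem primrecPred_true_mem : PrimrecPred fun ρ : List Bool => true ∈ ρ :=
  (PrimrecPred.exists_mem_list (Primrec.eq.comp Primrec.id (Primrec.const true))).of_eq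
    fun ρ => by simp

theorem primrecPred_startsLate (N : ℕ) : PrimrecPred (StartsLate N) := by
  refine ((Primrec.eq.comp (Primrec.list_take.comp (Primrec.const N) Primrec.id)
    (Primrec.const (List.replicate N false))).and primrecPred_true_mem).of_eq fun ρ => ?_
  constructor
  · rintro ⟨h, hρ⟩
    have h : ρ.take N = List.replicate N false := h
    refine ⟨ρ.drop N, by rw [← h]; simp, ?_⟩
    rw [← List.take_append_drop N ρ, h] at hρ
    simpa using hρ
  · rintro ⟨τ, rfl, hτ⟩
    simp [hτ]

/-! ### Forcing -/

/-- The string which determines the clopen set with label `e`. -/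
def leafString (e : ℕ) : List ℕ := Denumerable.ofNat (List ℕ) (e / 2 - 1)

theorem mem_leafSet_congr {e : ℕ} {x y : ℕ → ℕ} (h : ∀ i < (leafString e).length, x i = y i) :
    x ∈ leafSet e ↔ y ∈ leafSet e := by
  have : x ∈ Cyl (leafString e) ↔ y ∈ Cyl (leafString e) :=
    forall₂_congr fun i hi => by rw [h i hi]
  unfold leafSet
  unfold leafString at this
  split_ifs <;> simp [this]

theorem primrecPred_mem_leafSet : PrimrecPred fun q : ℕ × List Bool =>
    (fun n => (q.2.getD n false).toNat) ∈ leafSet q.1 := by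
  have hstr : Primrec leafString := (Primrec.ofNat (List ℕ)).comp (Primrec.nat_sub.comp
    (Primrec.nat_div.comp Primrec.id (Primrec.const 2)) (Primrec.const 1))
  have hcyl : PrimrecPred fun q : ℕ × List Bool =>
      (fun n => (q.2.getD n false).toNat) ∈ Cyl (leafString q.1) := by
    have : PrimrecRel fun (i : ℕ) (q : ℕ × List Bool) =>
        (q.2.getD i false).toNat = (leafString q.1).getD i 0 :=
      Primrec.eq.comp ((Primrec.dom_finite Bool.toNat).comp ((Primrec.list_getD false).comp
        (Primrec.snd.comp Primrec.snd) Primrec.fst))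
        ((Primrec.list_getD 0).comp (hstr.comp (Primrec.fst.comp Primrec.snd)) Primrec.fst)
    exact (this.forall_mem_list.comp (Primrec.list_range.comp (Primrec.list_length.comp
      (hstr.comp Primrec.fst))) Primrec.id).of_eq fun q => by simp [Cyl]
  have hz : PrimrecPred fun q : ℕ × List Bool => q.1 = 0 :=
    Primrec.eq.comp Primrec.fst (Primrec.const 0)
  have ho : PrimrecPred fun q : ℕ × List Bool => q.1 = 1 :=
    Primrec.eq.comp Primrec.fst (Primrec.const 1)
  have he : PrimrecPred fun q : ℕ × List Bool => q.1 % 2 = 0 :=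
    Primrec.eq.comp (Primrec.nat_mod.comp Primrec.fst (Primrec.const 2)) (Primrec.const 0)
  refine (hz.not.and (ho.or ((he.and hcyl).or (he.not.and hcyl.not)))).of_eq fun q => ?_
  unfold leafSet leafString
  split_ifs <;> simp_all

/-- The binary string `σ` forces the `Π_m` statement with code `l ↦ f (p ++ l)`; for `b = false`
this is the negation of the corresponding `Σ_m` statement. -/
def Forces (f : List ℕ → ℕ) : ℕ → Bool → List ℕ → List Bool → Prop
  | 0, b, p, σ => (leafString (f p)).length ≤ σ.length ∧
      ((fun n => (σ.getD n false).toNat) ∈ leafSet (f p) ↔ b = true)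
  | m + 1, b, p, σ => ∀ t τ, ¬ Forces f m (!b) (p ++ [t]) (σ ++ τ)

/-- The `Π_m` statement with code `l ↦ f (p ++ l)` and polarity `b` holds of `x`. -/
def PiHolds (f : List ℕ → ℕ) (m : ℕ) (b : Bool) (p : List ℕ) (x : ℕ → ℕ) : Prop :=
  NFEval m (!b) (fun l => f (p ++ l)) x ↔ b = true

/-- Some initial segment of `y` decides each `Π_{m+1}` statement. -/
def DecidesAt (f : List ℕ → ℕ) (m : ℕ) (y : ℕ → ℕ) : Prop :=
  ∀ b p, ∃ ρ, IsInitial ρ y ∧ (Forces f (m + 1) b p ρ ∨ ∃ t, Forces f m (!b) (p ++ [t]) ρ)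

section Forcing

variable {f : List ℕ → ℕ}

theorem piHolds_succ {m : ℕ} {b : Bool} {p : List ℕ} {x : ℕ → ℕ} :
    PiHolds f (m + 1) b p x ↔ ∀ t, ¬ PiHolds f m (!b) (p ++ [t]) x := by
  cases b <;> simp [PiHolds, NFEval]

theorem piHolds_of_forces {y : ℕ → ℕ} (hy : ∀ n, y n < 2) (m : ℕ) :
    ∀ {b : Bool} {p : List ℕ} {σ : List Bool}, (∀ k, k + 1 < m → DecidesAt f k y) →
      IsInitial σ y → Forces f m b p σ → PiHolds f m b p y := by
  have leaf : ∀ {b : Bool} {p : List ℕ} {σ : List Bool}, IsInitial σ y →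
      (leafString (f p)).length ≤ σ.length →
        (((fun n => (σ.getD n false).toNat) ∈ leafSet (f p) ↔ b = true) ↔ PiHolds f 0 b p y) := by
    intro b p σ hσ hlen
    rw [mem_leafSet_congr (y := y) fun i hi => (hσ i (hi.trans_le hlen)).symm]
    simp [PiHolds, NFEval]
  induction m using Nat.strong_induction_on with
  | _ m ih =>
  intro b p σ hdec hσ hF
  rcases m with _ | _ | k
  · exact (leaf hσ hF.1).1 hF.2
  · refine piHolds_succ.2 fun t ht => ?_
    obtain ⟨ρ, hlen, hρ⟩ := exists_isInitial hy
      (max σ.length (leafString (f (p ++ [t]))).length)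
    obtain ⟨τ, rfl⟩ := hσ.exists_append hρ (by omega)
    exact hF t τ ⟨by omega, (leaf hρ (by omega)).2 ht⟩
  · refine piHolds_succ.2 fun t ht => ?_
    obtain ⟨ρ, hρ, h | ⟨s, hs⟩⟩ := hdec k (by omega) (!b) (p ++ [t])
    · rcases le_total σ.length ρ.length with hle | hle
      · obtain ⟨τ, rfl⟩ := hσ.exists_append hρ hle
        exact hF t τ h
      · obtain ⟨τ, rfl⟩ := hρ.exists_append hσ hle
        refine hF t [] fun s τ' => ?_
        rw [List.append_nil, List.append_assoc ρ τ τ']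
        exact h s _
    · exact piHolds_succ.1 ht s (ih k (by omega) (fun i hi => hdec i (by omega)) hρ hs)

theorem decidable_forces (hf : Computable f) (m : ℕ) :
    DecidableRelTo (chi (EmptyIter m)) fun q : Bool × List ℕ × List Bool =>
      Forces f m q.1 q.2.1 q.2.2 := by
  induction m with
  | zero =>
    have hfp : Computable fun q : Bool × List ℕ × List Bool => f q.2.1 :=
      hf.comp (Computable.fst.comp Computable.snd)
    have hσ : Computable fun q : Bool × List ℕ × List Bool => q.2.2 :=
      Computable.snd.comp Computable.snd
    have hlen : PrimrecPred fun q : ℕ × List Bool => (leafString q.1).length ≤ q.2.length :=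
      Primrec.nat_le.comp (Primrec.list_length.comp ((Primrec.ofNat (List ℕ)).comp
        (Primrec.nat_sub.comp (Primrec.nat_div.comp Primrec.fst (Primrec.const 2))
          (Primrec.const 1)))) (Primrec.list_length.comp Primrec.snd)
    have h₁ := (DecidableRelTo.of_primrecPred (g := chi (EmptyIter 0)) hlen).comp (hfp.pair hσ)
    have h₂ := (DecidableRelTo.of_primrecPred (g := chi (EmptyIter 0))
      primrecPred_mem_leafSet).comp (hfp.pair hσ)
    have h₃ := DecidableRelTo.of_computable (g := chi (EmptyIter 0))
      (Computable.fst (α := Bool) (β := List ℕ × List Bool))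
    simpa only [Forces, iff_iff_and_or_not_and_not] using
      h₁.and ((h₂.and h₃).or (h₂.not.and h₃.not))
  | succ m ih =>
    have := (ih.comp (h := fun q : (Bool × List ℕ × List Bool) × (ℕ × List Bool) =>
      (!q.1.1, q.1.2.1 ++ [q.2.1], q.1.2.2 ++ q.2.2)) (Primrec.pair
        (Primrec.not.comp (Primrec.fst.comp Primrec.fst)) (Primrec.pair
          (Primrec.list_concat.comp (Primrec.fst.comp (Primrec.snd.comp Primrec.fst))
            (Primrec.fst.comp Primrec.snd))
          (Primrec.list_append.comp (Primrec.snd.comp (Primrec.snd.comp Primrec.fst))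
            (Primrec.snd.comp Primrec.snd)))).to_comp).exists_jump.not
    change DecidableRelTo (chi (JumpSet (chi (EmptyIter m)))) _
    simpa only [Forces, Prod.exists, not_exists] using this

theorem DecidableRelTo.emptyIter_mono {α : Type} [Primcodable α] {P : α → Prop} {k n : ℕ}
    (h : k ≤ n) (hP : DecidableRelTo (chi (EmptyIter k)) P) :
    DecidableRelTo (chi (EmptyIter n)) P := by
  induction n, h using Nat.le_induction with
  | base => exact hP
  | succ n _ ih => exact ih.jump

theorem DecidableRelTo.cases_lt {α : Type} [Primcodable α] {g : ℕ → ℕ} {P : ℕ → α → Prop}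
    {Q : α → Prop} {n : ℕ} (hP : ∀ k < n, DecidableRelTo g (P k)) (hQ : DecidableRelTo g Q) :
    DecidableRelTo g fun q : ℕ × α => (q.1 < n ∧ P q.1 q.2) ∨ (n ≤ q.1 ∧ Q q.2) := by
  induction n with
  | zero => simpa using hQ.comp (h := fun q : ℕ × α => q.2) Computable.snd
  | succ n ih =>
    have heq : DecidableRelTo g fun q : ℕ × α => q.1 = n :=
      .of_primrecPred (Primrec.eq.comp Primrec.fst (Primrec.const n))
    have hn := (hP n (by omega)).comp (h := fun q : ℕ × α => q.2) Computable.snd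
    have := (heq.and hn).or (heq.not.and (ih fun k hk => hP k (by omega)))
    convert this using 2 with q
    rcases lt_trichotomy q.1 n with h | h | h
    · simp [h, h.ne, h.not_ge, h.trans (Nat.lt_succ_self n), show ¬ n + 1 ≤ q.1 by omega]
    · simp [h]
    · simp [h.ne', h.le, h.not_gt, show ¬ q.1 < n + 1 by omega, show n + 1 ≤ q.1 by omega]

/-- There is a `g`-computable partition all of whose `2`-coarsenings are generic up to level `n`,
have an initial segment in `S`, and meet the dense requirements `E`. -/
theorem exists_generic_partition {g : ℕ → ℕ} {n : ℕ}
    (hF : ∀ k ≤ n, DecidableRelTo g fun q : Bool × List ℕ × List Bool =>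
      Forces f k q.1 q.2.1 q.2.2)
    {S : ℕ × List Bool → Prop} (hS : DecidableRelTo g S) (htrue : ∀ t ρ, S (t, ρ) → true ∈ ρ)
    (hzero : ∀ N, ∃ t τ, S (t, List.replicate N false ++ τ))
    {E : ℕ × ℕ × List Bool → Prop} (hE : DecidableRelTo g E)
    (hdense : ∀ e σ, ∃ t τ, E (e, t, σ ++ τ)) :
    ∃ x ∈ OmegaPartInf, TuringReducibleFun x g ∧ ∀ y ∈ Coarsenings x 2,
      (∃ t ρ, S (t, ρ) ∧ IsInitial ρ y) ∧ (∀ k < n, DecidesAt f k y) ∧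
        ∀ e N, ∃ t ρ, N ≤ ρ.length ∧ E (e, t, ρ) ∧ IsInitial ρ y := by
  let dec : ℕ → Bool × List ℕ := fun e => (Encodable.decode e).getD default
  have hdec : Computable dec := computable_decode_getD _
  let P : ℕ → ℕ × ℕ × List Bool → Prop := fun k q =>
    Forces f (k + 1) (dec q.1).1 (dec q.1).2 q.2.2 ∨
      Forces f k (!(dec q.1).1) ((dec q.1).2 ++ [q.2.1]) q.2.2
  have hP : ∀ k < n, DecidableRelTo g (P k) := by
    intro k hk
    have hb : Computable fun q : ℕ × ℕ × List Bool => (dec q.1).1 :=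
      Computable.fst.comp (hdec.comp Computable.fst)
    have hp : Computable fun q : ℕ × ℕ × List Bool => (dec q.1).2 :=
      Computable.snd.comp (hdec.comp Computable.fst)
    have hρ : Computable fun q : ℕ × ℕ × List Bool => q.2.2 := Computable.snd.comp Computable.snd
    have ht : Computable fun q : ℕ × ℕ × List Bool => q.2.1 := Computable.fst.comp Computable.snd
    exact ((hF (k + 1) hk).comp (hb.pair (hp.pair hρ))).or ((hF k hk.le).comp
      ((Primrec.not.to_comp.comp hb).pair ((Computable.list_concat.comp hp ht).pair hρ)))
  have hPdense : ∀ k e σ, ∃ t τ, P k (e, t, σ ++ τ) := by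
    intro k e σ
    by_cases h : Forces f (k + 1) (dec e).1 (dec e).2 σ
    · exact ⟨0, [], Or.inl (by simpa using h)⟩
    · simp only [Forces, not_forall, not_not] at h
      obtain ⟨t, τ, h⟩ := h
      exact ⟨t, τ, Or.inr h⟩
  let D : ℕ × ℕ × List Bool → Prop := fun q => (q.1 = 0 ∧ S q.2) ∨ (q.1 ≠ 0 ∧
    (((q.1 - 1).unpair.1 < n ∧ P (q.1 - 1).unpair.1 ((q.1 - 1).unpair.2, q.2)) ∨
      (n ≤ (q.1 - 1).unpair.1 ∧ E ((q.1 - 1).unpair.2, q.2))))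
  have hD : DecidableRelTo g D := by
    have heq : DecidableRelTo g fun q : ℕ × ℕ × List Bool => q.1 = 0 :=
      .of_primrecPred (Primrec.eq.comp Primrec.fst (Primrec.const 0))
    have hunpair : Primrec fun q : ℕ × ℕ × List Bool => (q.1 - 1).unpair :=
      Primrec.unpair.comp (Primrec.nat_sub.comp Primrec.fst (Primrec.const 1))
    exact (heq.and (hS.comp Computable.snd)).or (heq.not.and
      ((DecidableRelTo.cases_lt hP hE).comp (h := fun q : ℕ × ℕ × List Bool =>
        ((q.1 - 1).unpair.1, (q.1 - 1).unpair.2, q.2)) (Primrec.pair (Primrec.fst.comp hunpair)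
          (Primrec.pair (Primrec.snd.comp hunpair) Primrec.snd)).to_comp))
  have hD_succ : ∀ e q, D (e + 1, q) ↔ ((e.unpair.1 < n ∧ P e.unpair.1 (e.unpair.2, q)) ∨
      (n ≤ e.unpair.1 ∧ E (e.unpair.2, q))) := fun e q => by simp [D]
  have hD_zero : ∀ q, D (0, q) ↔ S q := fun q => by simp [D]
  obtain ⟨x, hx, hxg, hxy⟩ := exists_partition_forall_coarsening hD
    (fun t ρ h => htrue t ρ ((hD_zero _).1 h))
    (fun N => by simpa only [hD_zero] using hzero N)
    (fun e σ => by
      simp only [hD_succ]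
      rcases lt_or_ge e.unpair.1 n with h | h
      · simpa [h, h.not_ge] using hPdense e.unpair.1 e.unpair.2 σ
      · simpa [h, h.not_gt] using hdense e.unpair.2 σ)
  refine ⟨x, hx, hxg, fun y hy => ?_⟩
  obtain ⟨h₀, h₁⟩ := hxy y hy
  refine ⟨by simpa only [hD_zero] using h₀, fun k hk b p => ?_, fun e N => ?_⟩
  · obtain ⟨t, ρ, -, h, hρ⟩ := h₁ (Nat.pair k (Encodable.encode (b, p))) 0
    rw [hD_succ] at h
    simp only [Nat.unpair_pair, hk, hk.not_ge, true_and, false_and, or_false] at h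
    have hbp : dec (Encodable.encode (b, p)) = (b, p) := by simp [dec]
    simp only [P, hbp] at h
    exact ⟨ρ, hρ, h.imp_right fun h => ⟨t, h⟩⟩
  · obtain ⟨t, ρ, hN, h, hρ⟩ := h₁ (Nat.pair n e) N
    rw [hD_succ] at h
    simp only [Nat.unpair_pair, lt_irrefl, le_refl, true_and, false_and, false_or] at h
    exact ⟨t, ρ, hN, h, hρ⟩

end Forcing

theorem nfEval_true_iff_exists_piHolds {n : ℕ} {f : List ℕ → ℕ} {x : ℕ → ℕ} :
    NFEval (n + 1) true f x ↔ ∃ t, PiHolds f n true [t] x := by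
  simp [NFEval, PiHolds]

/-- for a coloring `(ω)^2 = R ∪ ¬R` with `R` and its complement given by
computable Borel codes for `Σ^0_{n+2}` sets, there is a `∅^{(n)}`-computable partition
homogeneous for `¬R` or a `∅^{(n+1)}`-computable partition homogeneous for `R`. -/
theorem stmt13 (n : ℕ) (fR fC : List ℕ → ℕ)
    (hfR : Computable fR) (hfC : Computable fC)
    (hcompl : ∀ x ∈ OmegaPart 2, (NFEval (n + 2) true fR x ↔ ¬ NFEval (n + 2) true fC x)) :
    (∃ x ∈ OmegaPartInf, TuringReducibleFun x (chi (EmptyIter n)) ∧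
        ∀ y ∈ Coarsenings x 2, ¬ NFEval (n + 2) true fR y) ∨
    (∃ x ∈ OmegaPartInf, TuringReducibleFun x (chi (EmptyIter (n + 1))) ∧
        ∀ y ∈ Coarsenings x 2, NFEval (n + 2) true fR y) := by
  have hF : ∀ {k m}, k ≤ m → DecidableRelTo (chi (EmptyIter m))
      fun q : Bool × List ℕ × List Bool => Forces fR k q.1 q.2.1 q.2.2 :=
    fun h => (decidable_forces hfR _).emptyIter_mono h
  by_cases hcase : ∀ N, ∃ t ρ, StartsLate N ρ ∧ Forces fR (n + 1) true [t] ρ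
  · right
    obtain ⟨x, hx, hxg, hxy⟩ := exists_generic_partition (f := fR) (n := n)
      (fun k hk => hF (hk.trans n.le_succ))
      (S := fun q => Forces fR (n + 1) true [q.1] q.2 ∧ true ∈ q.2)
      (((hF le_rfl).comp (h := fun q : ℕ × List Bool => (true, [q.1], q.2))
        (Primrec.pair (Primrec.const true) (Primrec.pair
          (Primrec.list_cons.comp Primrec.fst (Primrec.const [])) Primrec.snd)).to_comp).and
        ((DecidableRelTo.of_primrecPred primrecPred_true_mem).comp Computable.snd))
      (fun t ρ h => h.2)
      (fun N => by
        obtain ⟨t, ρ, hρ, h⟩ := hcase N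
        have hmem := hρ.mem
        obtain ⟨τ, rfl, -⟩ := hρ
        exact ⟨t, τ, h, hmem⟩)
      (E := fun _ => True)
      (by simpa using DecidableRelTo.of_computable (p := fun _ => true) (Computable.const true)) (fun _ _ => ⟨0, [], trivial⟩)
    refine ⟨x, hx, hxg, fun y hy => ?_⟩
    obtain ⟨⟨t, ρ, ⟨hρ, -⟩, hρy⟩, hdec, -⟩ := hxy y hy
    exact nfEval_true_iff_exists_piHolds.2 ⟨t, piHolds_of_forces hy.1.2.1 (n + 1)
      (fun k hk => hdec k (by omega)) hρy hρ⟩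
  · left
    push Not at hcase
    obtain ⟨N, hN⟩ := hcase
    have hlate : DecidableRelTo (chi (EmptyIter n)) (StartsLate N) :=
      .of_primrecPred (primrecPred_startsLate N)
    obtain ⟨x, hx, hxg, hxy⟩ := exists_generic_partition (f := fR) (n := n)
      (fun k hk => hF hk)
      (S := fun q => StartsLate N q.2) (hlate.comp Computable.snd) (fun t ρ h => h.mem)
      (fun M => ⟨0, List.replicate N false ++ [true], List.replicate M false ++ [true], by
        rw [← List.append_assoc, ← List.append_assoc, ← List.replicate_add,
          ← List.replicate_add, add_comm], by simp⟩)
      (E := fun q => ¬ StartsLate N q.2.2 ∨ Forces fR n false [q.1, q.2.1] q.2.2)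
      ((hlate.comp (Computable.snd.comp Computable.snd)).not.or ((hF le_rfl).comp
        (h := fun q : ℕ × ℕ × List Bool => (false, [q.1, q.2.1], q.2.2))
        (Primrec.pair (Primrec.const false) (Primrec.pair
          (Primrec.list_cons.comp Primrec.fst (Primrec.list_cons.comp
            (Primrec.fst.comp Primrec.snd) (Primrec.const [])))
          (Primrec.snd.comp Primrec.snd))).to_comp))
      (fun e σ => by
        by_cases hσ : StartsLate N σ
        · have := hN e σ hσ
          simp only [Forces, not_forall, not_not] at this
          obtain ⟨t, τ, h⟩ := this
          exact ⟨t, τ, Or.inr h⟩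
        · exact ⟨0, [], Or.inl (by simpa using hσ)⟩)
    refine ⟨x, hx, hxg, fun y hy hR => ?_⟩
    obtain ⟨⟨_, ρ, hρ, hρy⟩, hdec, hE⟩ := hxy y hy
    obtain ⟨e, he⟩ := nfEval_true_iff_exists_piHolds.1 hR
    obtain ⟨t, ρ', hlen, h, hρ'y⟩ := hE e ρ.length
    obtain ⟨τ, rfl⟩ := hρy.exists_append hρ'y hlen
    exact piHolds_succ.1 he t (piHolds_of_forces hy.1.2.1 n (fun k hk => hdec k (by omega)) hρ'y
      (h.resolve_left (not_not.2 (hρ.append τ))))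
end

section
/- Fix n ≥ 2. The problem Δ^0_n-rDRT^2_2 (given a reduced coloring (ω)^2 = R_0 ∪ R_1 with each R_i presented by a Borel code for a Σ^0_n set in normal form, find an infinite partition x and i < 2 with (x)^2 ⊆ R_i) is strongly Weihrauch equivalent to D^n_2 (given a stable coloring c : [ω]^n → 2, find an infinite limit-homogeneous set). -/
open Set

/-- Iterated limit: `lim_{s_1} ⋯ lim_{s_m} g(s_1,…,s_m) = v`. -/
def IterLim : ℕ → (List ℕ → ℕ) → ℕ → Prop
  | 0, g, v => g [] = v
  | m + 1, g, v => ∃ N, ∀ s, N ≤ s → IterLim m (fun l => g (s :: l)) v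

/-- An instance-solution problem on Baire space. -/
structure RProblem where
  inst : (ℕ → ℕ) → Prop
  sol : (ℕ → ℕ) → (ℕ → ℕ) → Prop

/-- Strong Weihrauch reducibility. -/
def StrongWeihrauchRed (P Q : RProblem) : Prop :=
  ∃ Φ Ψ : OracleCode, ∀ A, P.inst A →
    ∃ A' : ℕ → ℕ, Φ.evalo (toP A) = toP A' ∧ Q.inst A' ∧
      ∀ B, Q.sol A' B → ∃ S : ℕ → ℕ, Ψ.evalo (toP B) = toP S ∧ P.sol A S

/-- The problem `D^n_2`: instances are stable 2-colorings of `[ω]^n` (presented as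
functions on coded tuples), solutions are (characteristic functions of) infinite
limit-homogeneous sets. -/
def Dn2 (n : ℕ) : RProblem where
  inst A := (∀ m, A m ≤ 1) ∧
    ∀ k, ∃ v, IterLim (n - 1) (fun l => A (Encodable.encode (k :: l))) v
  sol A L := {k | L k = 1}.Infinite ∧
    ∃ i ≤ 1, ∀ k, L k = 1 → IterLim (n - 1) (fun l => A (Encodable.encode (k :: l))) i

/-- The two `Σ^0_n` normal-form Borel codes packed into an instance. -/
def fCode (A : ℕ → ℕ) (i : ℕ) : List ℕ → ℕ := fun l => A (Nat.pair i (Encodable.encode l))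

/-- The problem `Δ^0_n`-`rDRT^2_2`: instances are reduced colorings `(ω)^2 = R_0 ∪ R_1`
with each `R_i` presented by a Borel code for a `Σ^0_n` set in normal form; solutions
are homogeneous infinite partitions. -/
def rDRT (n : ℕ) : RProblem where
  inst A :=
    (∀ x ∈ OmegaPart 2, (NFEval n true (fCode A 0) x ↔ ¬ NFEval n true (fCode A 1) x)) ∧
    ∀ x ∈ OmegaPart 2, ∀ y ∈ OmegaPart 2, mu x 1 = mu y 1 →
      (NFEval n true (fCode A 0) x ↔ NFEval n true (fCode A 0) y)
  sol A x := x ∈ OmegaPartInf ∧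
    ∃ i ≤ 1, ∀ y ∈ Coarsenings x 2, NFEval n true (fCode A i) y

/-! ### Oracle-computable functionals -/

/-- A total functional on coded data is computed, uniformly in the oracle, by a single code. -/
def OComp {α β : Type} [Primcodable α] [Primcodable β] (F : (ℕ → ℕ) → α → β) : Prop :=
  ∃ c : OracleCode, ∀ A a,
    c.evalo (toP A) (Encodable.encode a) = Part.some (Encodable.encode (F A a))

theorem exists_code_of_natPrimrec {f : ℕ → ℕ} (hf : Nat.Primrec f) :
    ∃ c : OracleCode, ∀ A n, c.evalo (toP A) n = Part.some (f n) := by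
  induction hf with
  | zero => exact ⟨.zero, fun _ _ => rfl⟩
  | succ => exact ⟨.succ, fun _ _ => rfl⟩
  | left => exact ⟨.left, fun _ _ => rfl⟩
  | right => exact ⟨.right, fun _ _ => rfl⟩
  | pair _ _ ihf ihg =>
    obtain ⟨c, hc⟩ := ihf
    obtain ⟨d, hd⟩ := ihg
    exact ⟨.pair c d, fun A n => by simp [OracleCode.evalo, hc, hd, Seq.seq]⟩
  | comp _ _ ihf ihg =>
    obtain ⟨c, hc⟩ := ihf
    obtain ⟨d, hd⟩ := ihg
    exact ⟨.comp c d, fun A n => (congrArg (Part.bind · _) (hd A n)).trans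
      ((Part.bind_some _ _).trans (hc A _))⟩
  | prec _ _ ihf ihg =>
    obtain ⟨c, hc⟩ := ihf
    obtain ⟨d, hd⟩ := ihg
    refine ⟨.prec c d, fun A n => ?_⟩
    simp only [OracleCode.evalo, Nat.unpaired]
    induction n.unpair.2 with
    | zero => simp [hc]
    | succ y ih => simp only [ih]; simp [hd]

namespace OComp

variable {α β γ : Type} [Primcodable α] [Primcodable β] [Primcodable γ]

theorem of_primrec {f : α → β} (hf : Primrec f) : OComp fun _ => f := by
  obtain ⟨c, hc⟩ := exists_code_of_natPrimrec (Nat.Primrec.pred.comp hf)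
  exact ⟨c, fun A a => by simp [hc]⟩

theorem oracle : OComp fun A (n : ℕ) => A n :=
  ⟨.oracle, fun _ _ => rfl⟩

theorem comp {G : (ℕ → ℕ) → β → γ} {F : (ℕ → ℕ) → α → β} (hG : OComp G) (hF : OComp F) :
    OComp fun A a => G A (F A a) := by
  obtain ⟨c, hc⟩ := hG
  obtain ⟨d, hd⟩ := hF
  exact ⟨.comp c d, fun A a => (congrArg (Part.bind · _) (hd A a)).trans
      ((Part.bind_some _ _).trans (hc A _))⟩

theorem pair {F : (ℕ → ℕ) → α → β} {G : (ℕ → ℕ) → α → γ} (hF : OComp F) (hG : OComp G) :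
    OComp fun A a => (F A a, G A a) := by
  obtain ⟨c, hc⟩ := hF
  obtain ⟨d, hd⟩ := hG
  exact ⟨.pair c d, fun A a => by simp [OracleCode.evalo, hc, hd, Seq.seq]⟩

theorem nat_rec {F : (ℕ → ℕ) → α → β} {G : (ℕ → ℕ) → α × ℕ × β → β}
    (hF : OComp F) (hG : OComp G) :
    OComp fun A (p : α × ℕ) =>
      (Nat.rec (F A p.1) (fun y ih => G A (p.1, y, ih)) p.2 : β) := by
  obtain ⟨c, hc⟩ := hF
  obtain ⟨d, hd⟩ := hG
  refine ⟨.prec c d, fun A p => ?_⟩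
  obtain ⟨a, n⟩ := p
  simp only [OracleCode.evalo, Nat.unpaired, Encodable.encode_prod_val, Nat.unpair_pair,
    Encodable.encode_nat]
  induction n with
  | zero => simp [hc]
  | succ y ih =>
    simp only [ih]
    have := hd A (a, y, Nat.rec (F A a) (fun y ih => G A (a, y, ih)) y)
    simp only [Encodable.encode_prod_val, Encodable.encode_nat] at this
    simp [this]

theorem prim₁ {f : β → γ} (hf : Primrec f) {F : (ℕ → ℕ) → α → β} (hF : OComp F) :
    OComp fun A a => f (F A a) :=
  (of_primrec hf).comp hF

theorem prim₂ {δ : Type} [Primcodable δ] {f : β → γ → δ} (hf : Primrec₂ f)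
    {F : (ℕ → ℕ) → α → β} {G : (ℕ → ℕ) → α → γ} (hF : OComp F) (hG : OComp G) :
    OComp fun A a => f (F A a) (G A a) :=
  (of_primrec hf).comp (hF.pair hG)

theorem cond {B : (ℕ → ℕ) → α → Bool} {F G : (ℕ → ℕ) → α → β}
    (hB : OComp B) (hF : OComp F) (hG : OComp G) :
    OComp fun A a => bif B A a then F A a else G A a :=
  (of_primrec (Primrec.cond (Primrec.fst (α := Bool) (β := β × β))
    (Primrec.fst.comp Primrec.snd) (Primrec.snd.comp Primrec.snd))).comp (hB.pair (hF.pair hG))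

theorem exists_code {F : (ℕ → ℕ) → ℕ → ℕ} (hF : OComp F) :
    ∃ c : OracleCode, ∀ A, c.evalo (toP A) = toP (F A) := by
  obtain ⟨c, hc⟩ := hF
  exact ⟨c, fun A => funext fun n => hc A n⟩

end OComp

/-- Bounded existential quantification of a Boolean predicate: `∃ t < N, q t`. -/
def bex (q : ℕ → Bool) (N : ℕ) : Bool := Nat.rec false (fun t ih => ih || q t) N

/-- Bounded universal quantification of a Boolean predicate: `∀ t < N, q t`. -/
def ball (q : ℕ → Bool) (N : ℕ) : Bool := !bex (fun t => !q t) N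

theorem bex_iff {q : ℕ → Bool} {N : ℕ} : bex q N = true ↔ ∃ t < N, q t = true := by
  induction N with
  | zero => simp [bex]
  | succ N ih =>
    have : bex q (N + 1) = (bex q N || q N) := rfl
    rw [this, Bool.or_eq_true, ih]
    constructor
    · rintro (⟨t, ht, h⟩ | h)
      · exact ⟨t, by omega, h⟩
      · exact ⟨N, by omega, h⟩
    · rintro ⟨t, ht, h⟩
      rcases Nat.lt_succ_iff_lt_or_eq.1 ht with h' | rfl
      · exact Or.inl ⟨t, h', h⟩
      · exact Or.inr h

theorem ball_iff {q : ℕ → Bool} {N : ℕ} : ball q N = true ↔ ∀ t < N, q t = true := by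
  rw [ball, Bool.not_eq_true', ← Bool.not_eq_true, bex_iff]
  push Not
  simp

section Quantifiers

variable {α : Type} [Primcodable α]

theorem OComp.bex {Q : (ℕ → ℕ) → α → ℕ → Bool} {N : (ℕ → ℕ) → α → ℕ}
    (hQ : OComp fun A (p : α × ℕ) => Q A p.1 p.2) (hN : OComp N) :
    OComp fun A a => bex (Q A a) (N A a) := by
  have hG : OComp fun A (p : α × ℕ × Bool) => (p.2.2 || Q A p.1 p.2.1) :=
    prim₂ Primrec.or (of_primrec (Primrec.snd.comp Primrec.snd))
      (hQ.comp (of_primrec (Primrec.fst.pair (Primrec.fst.comp Primrec.snd))))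
  exact (nat_rec (of_primrec (Primrec.const false)) hG).comp ((of_primrec Primrec.id).pair hN)

theorem OComp.ball {Q : (ℕ → ℕ) → α → ℕ → Bool} {N : (ℕ → ℕ) → α → ℕ}
    (hQ : OComp fun A (p : α × ℕ) => Q A p.1 p.2) (hN : OComp N) :
    OComp fun A a => ball (Q A a) (N A a) :=
  prim₁ Primrec.not (OComp.bex (prim₁ Primrec.not hQ) hN)

end Quantifiers

theorem primrec_ofNat_list : Primrec (Denumerable.ofNat (List ℕ)) := by
  refine (Primrec.option_getD.comp (Primrec.decode (α := List ℕ)) (Primrec.const [])).of_eq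
    fun n => ?_
  exact congrArg (fun o : Option (List ℕ) => o.getD []) (Denumerable.decode_eq_ofNat (List ℕ) n)

/-! ### Alternating quantifiers and iterated limits -/

/-- `m` alternating quantifiers in front of a predicate on tuples, `true` for a leading `∃`. -/
def AltQuant : ℕ → Bool → (List ℕ → Prop) → Prop
  | 0, _, p => p []
  | m + 1, true, p => ∃ t, AltQuant m false fun l => p (t :: l)
  | m + 1, false, p => ∀ t, AltQuant m true fun l => p (t :: l)

theorem nfEval_iff (m : ℕ) (b : Bool) (f : List ℕ → ℕ) (x : ℕ → ℕ) :
    NFEval m b f x ↔ AltQuant m b fun l => x ∈ leafSet (f l) := by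
  induction m generalizing b f with
  | zero => rfl
  | succ m ih => cases b <;> simp [NFEval, AltQuant, ih]

theorem not_altQuant_false (m : ℕ) (b : Bool) : ¬ AltQuant m b fun _ => False := by
  induction m generalizing b with
  | zero => simp [AltQuant]
  | succ m ih => cases b <;> simp [AltQuant, ih]

/-- `P` holds for all tuples along the iterated limit filter. -/
def IterEventually : ℕ → (List ℕ → Prop) → Prop
  | 0, P => P []
  | m + 1, P => ∃ N, ∀ s, N ≤ s → IterEventually m fun l => P (s :: l)

theorem iterLim_iff (m : ℕ) (g : List ℕ → ℕ) (v : ℕ) :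
    IterLim m g v ↔ IterEventually m fun l => g l = v := by
  induction m generalizing g with
  | zero => rfl
  | succ m ih => simp [IterLim, IterEventually, ih]

namespace IterEventually

theorem mono {m : ℕ} {P Q : List ℕ → Prop} (hP : IterEventually m P) (h : ∀ l, P l → Q l) :
    IterEventually m Q := by
  induction m generalizing P Q with
  | zero => exact h _ hP
  | succ m ih =>
    obtain ⟨N, hN⟩ := hP
    exact ⟨N, fun s hs => ih (hN s hs) fun l => h _⟩

theorem and {m : ℕ} {P Q : List ℕ → Prop} (hP : IterEventually m P) (hQ : IterEventually m Q) :
    IterEventually m fun l => P l ∧ Q l := by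
  induction m generalizing P Q with
  | zero => exact ⟨hP, hQ⟩
  | succ m ih =>
    obtain ⟨N, hN⟩ := hP
    obtain ⟨M, hM⟩ := hQ
    exact ⟨max N M, fun s hs => ih (hN s (by omega)) (hM s (by omega))⟩

theorem of_forall {m : ℕ} {P : List ℕ → Prop} (h : ∀ l, P l) : IterEventually m P := by
  induction m generalizing P with
  | zero => exact h _
  | succ m ih => exact ⟨0, fun s _ => ih fun l => h _⟩

theorem forall_lt {m : ℕ} {P : ℕ → List ℕ → Prop} (h : ∀ t, IterEventually m (P t)) (N : ℕ) :
    IterEventually m fun l => ∀ t < N, P t l := by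
  induction N with
  | zero => exact of_forall fun l t ht => absurd ht (Nat.not_lt_zero t)
  | succ N ih =>
    refine (ih.and (h N)).mono fun l hl t ht => ?_
    rcases Nat.lt_succ_iff_lt_or_eq.1 ht with h' | rfl
    exacts [hl.1 t h', hl.2]

theorem exists_of {m : ℕ} {P : List ℕ → Prop} (h : IterEventually m P) : ∃ l, P l := by
  induction m generalizing P with
  | zero => exact ⟨_, h⟩
  | succ m ih =>
    obtain ⟨N, hN⟩ := h
    obtain ⟨l, hl⟩ := ih (hN N le_rfl)
    exact ⟨_, hl⟩

end IterEventually

theorem IterLim.unique {m : ℕ} {g : List ℕ → ℕ} {v w : ℕ} (hv : IterLim m g v)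
    (hw : IterLim m g w) : v = w := by
  rw [iterLim_iff] at hv hw
  obtain ⟨l, h₁, h₂⟩ := (hv.and hw).exists_of
  exact h₁.symm.trans h₂

/-! ### Approximating a `Δ⁰ₙ` predicate by an iterated limit -/

/-- `AltQuant` with the quantifiers bounded by the entries of a tuple. -/
def boundedQuant : ℕ → Bool → (List ℕ → Bool) → List ℕ → Bool
  | 0, _, f, _ => f []
  | m + 1, true, f, s =>
      bex (fun t => boundedQuant m false (fun l => f (t :: l)) s.tail) (s.headI + 1)
  | m + 1, false, f, s =>
      ball (fun t => boundedQuant m true (fun l => f (t :: l)) s.tail) (s.headI + 1)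

theorem iterEventually_boundedQuant (m : ℕ) (b : Bool) (f : List ℕ → Bool) :
    IterEventually m fun s =>
      (boundedQuant m b f s = true ↔ AltQuant m b fun l => f l = true) := by
  induction m generalizing b f with
  | zero => exact Iff.rfl
  | succ m ih =>
    have key := fun (c : Bool) (s : ℕ) =>
      IterEventually.forall_lt (fun t => ih c fun l => f (t :: l)) (s + 1)
    cases b
    · by_cases h : AltQuant (m + 1) false fun l => f l = true
      · refine ⟨0, fun s _ => (key true s).mono fun l hl => ?_⟩
        simp only [h, iff_true]
        exact ball_iff.2 fun t ht => (hl t ht).2 (h t)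
      · have h' := h
        simp only [AltQuant, not_forall] at h'
        obtain ⟨t, ht⟩ := h'
        refine ⟨t, fun s hs => (key true s).mono fun l hl => ?_⟩
        simp only [h, iff_false]
        exact fun hb => ht ((hl t (by omega)).1 (ball_iff.1 hb t (by simp; omega)))
    · by_cases h : AltQuant (m + 1) true fun l => f l = true
      · obtain ⟨t, ht⟩ := id h
        refine ⟨t, fun s hs => (key false s).mono fun l hl => ?_⟩
        simp only [h, iff_true]
        exact bex_iff.2 ⟨t, by simp; omega, (hl t (by omega)).2 ht⟩
      · refine ⟨0, fun s _ => (key false s).mono fun l hl => ?_⟩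
        simp only [h, iff_false]
        intro hb
        obtain ⟨t, ht, hb⟩ := bex_iff.1 hb
        exact h ⟨t, (hl t ht).1 hb⟩

theorem OComp.boundedQuant (m : ℕ) (b : Bool) {α : Type} [Primcodable α]
    {R : (ℕ → ℕ) → α → List ℕ → Bool} (hR : OComp fun A (p : α × List ℕ) => R A p.1 p.2) :
    OComp fun A (p : α × List ℕ) => boundedQuant m b (R A p.1) p.2 := by
  induction m generalizing b α with
  | zero => exact hR.comp (of_primrec (Primrec.fst.pair (Primrec.const [])))
  | succ m ih =>
    have hR' : OComp fun A (q : (α × ℕ) × List ℕ) => R A q.1.1 (q.1.2 :: q.2) :=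
      hR.comp (of_primrec ((Primrec.fst.comp Primrec.fst).pair
        (Primrec.list_cons.comp (Primrec.snd.comp Primrec.fst) Primrec.snd)))
    have hQ := fun c => (ih c (R := fun A (q : α × ℕ) l => R A q.1 (q.2 :: l)) hR').comp
      (of_primrec (((Primrec.fst.comp Primrec.fst).pair Primrec.snd).pair
        (Primrec.list_tail.comp (Primrec.snd.comp Primrec.fst)) :
        Primrec fun q : (α × List ℕ) × ℕ => ((q.1.1, q.2), q.1.2.tail)))
    have hN : OComp fun _ (p : α × List ℕ) => p.2.headI + 1 :=
      of_primrec (Primrec.succ.comp (Primrec.list_headI.comp Primrec.snd))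
    cases b
    · exact OComp.ball (hQ true) hN
    · exact OComp.bex (hQ false) hN

/-- The approximation to the predicate defined by `∃ t, ∀ t', …, f₀`, given that
`∃ t, ∀ t', …, f₁` defines its complement. It is `true` when a witness for the former shows up
before one for the latter. -/
def deltaApprox (m : ℕ) (f₀ f₁ : List ℕ → Bool) (s : List ℕ) : Bool :=
  bex (fun t => boundedQuant (m + 1) false (fun l => f₀ (t :: l)) s &&
    !bex (fun t' => boundedQuant (m + 1) false (fun l => f₁ (t' :: l)) s) t) (s.headI + 1)

theorem boundedQuant_cons_iff {m : ℕ} {f : List ℕ → Bool} {s : ℕ} {l : List ℕ}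
    (h : ∀ t < s + 1, ∀ t' < s + 1, (boundedQuant m true (fun l => f (t :: t' :: l)) l = true ↔
      AltQuant m true fun l => f (t :: t' :: l) = true)) :
    ∀ t < s + 1, (boundedQuant (m + 1) false (fun l => f (t :: l)) (s :: l) = true ↔
      ∀ t' < s + 1, AltQuant m true fun l => f (t :: t' :: l) = true) := fun t ht =>
  ball_iff.trans (forall₂_congr fun t' ht' => h t ht t' ht')

theorem iterEventually_deltaApprox (m : ℕ) (f₀ f₁ : List ℕ → Bool)
    (h : (AltQuant (m + 2) true fun l => f₀ l = true) ↔
      ¬ AltQuant (m + 2) true fun l => f₁ l = true) :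
    IterEventually (m + 1) fun s =>
      (deltaApprox m f₀ f₁ s = true ↔ AltQuant (m + 2) true fun l => f₀ l = true) := by
  have key := fun (f : List ℕ → Bool) (s : ℕ) =>
    IterEventually.forall_lt (fun t => IterEventually.forall_lt
      (fun t' => iterEventually_boundedQuant m true fun l => f (t :: t' :: l)) (s + 1)) (s + 1)
  have refute : ∀ f : List ℕ → Bool, (¬ AltQuant (m + 2) true fun l => f l = true) → ∀ t₀,
      ∃ N, ∀ t ≤ t₀, ∃ t' < N, ¬ AltQuant m true fun l => f (t :: t' :: l) = true := by
    intro f hf t₀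
    simp only [AltQuant, not_exists, not_forall] at hf
    choose w hw using hf
    refine ⟨(Finset.range (t₀ + 1)).sup w + 1, fun t ht => ⟨w t, ?_, hw t⟩⟩
    exact Nat.lt_succ_of_le (Finset.le_sup (f := w) (Finset.mem_range.2 (by omega)))
  by_cases h₀ : AltQuant (m + 2) true fun l => f₀ l = true
  · obtain ⟨t₀, ht₀⟩ := id h₀
    obtain ⟨N, hN⟩ := refute f₁ (h.1 h₀) t₀
    refine ⟨max N t₀, fun s hs => ((key f₀ s).and (key f₁ s)).mono fun l hl => ?_⟩
    simp only [h₀, iff_true]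
    refine bex_iff.2 ⟨t₀, by simp; omega, ?_⟩
    rw [Bool.and_eq_true, Bool.not_eq_true', ← Bool.not_eq_true, bex_iff]
    refine ⟨(boundedQuant_cons_iff hl.1 t₀ (by omega)).2 fun t' _ => ht₀ t', ?_⟩
    rintro ⟨t, ht, hb⟩
    obtain ⟨t', ht', hn⟩ := hN t ht.le
    exact hn ((boundedQuant_cons_iff hl.2 t (by omega)).1 hb t' (by omega))
  · obtain ⟨t₁, ht₁⟩ := not_not.1 (mt h.2 h₀)
    obtain ⟨N, hN⟩ := refute f₀ h₀ t₁
    refine ⟨max N t₁, fun s hs => ((key f₀ s).and (key f₁ s)).mono fun l hl => ?_⟩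
    simp only [h₀, iff_false]
    intro hb
    obtain ⟨t, ht, hb⟩ := bex_iff.1 hb
    rw [Bool.and_eq_true, Bool.not_eq_true', ← Bool.not_eq_true, bex_iff] at hb
    replace ht : t < s + 1 := ht
    rcases le_or_gt t t₁ with hle | hlt
    · obtain ⟨t', ht', hn⟩ := hN t hle
      exact hn ((boundedQuant_cons_iff hl.1 t ht).1 hb.1 t' (by omega))
    · exact hb.2 ⟨t₁, hlt,
        (boundedQuant_cons_iff hl.2 t₁ (by omega)).2 fun t' _ => ht₁ t'⟩

theorem OComp.deltaApprox (m : ℕ) {α : Type} [Primcodable α]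
    {R₀ R₁ : (ℕ → ℕ) → α → List ℕ → Bool} (h₀ : OComp fun A (p : α × List ℕ) => R₀ A p.1 p.2)
    (h₁ : OComp fun A (p : α × List ℕ) => R₁ A p.1 p.2) :
    OComp fun A (p : α × List ℕ) => deltaApprox m (R₀ A p.1) (R₁ A p.1) p.2 := by
  have cons : ∀ {R : (ℕ → ℕ) → α → List ℕ → Bool}, (OComp fun A (p : α × List ℕ) => R A p.1 p.2) →
      OComp fun A (q : (α × List ℕ) × ℕ) =>
        _root_.boundedQuant (m + 1) false (fun l => R A q.1.1 (q.2 :: l)) q.1.2 := by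
    intro R hR
    have hR' : OComp fun A (q : (α × ℕ) × List ℕ) => R A q.1.1 (q.1.2 :: q.2) :=
      hR.comp (of_primrec ((Primrec.fst.comp Primrec.fst).pair
        (Primrec.list_cons.comp (Primrec.snd.comp Primrec.fst) Primrec.snd)))
    exact (OComp.boundedQuant (m + 1) false
      (R := fun A (q : α × ℕ) l => R A q.1 (q.2 :: l)) hR').comp
      (of_primrec (((Primrec.fst.comp Primrec.fst).pair Primrec.snd).pair
        (Primrec.snd.comp Primrec.fst)))
  refine OComp.bex (prim₂ Primrec.and (cons h₀) (prim₁ Primrec.not (OComp.bex ?_ ?_)))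
    (of_primrec (Primrec.succ.comp (Primrec.list_headI.comp Primrec.snd)))
  · exact (cons h₁).comp (of_primrec ((Primrec.fst.comp Primrec.fst).pair Primrec.snd))
  · exact of_primrec Primrec.snd

/-! ### Membership of step functions in coded clopen sets -/

/-- The step function `0^k 1^ω`. -/
def stepFn (k : ℕ) : ℕ → ℕ := fun n => if n < k then 0 else 1

/-- Decision procedure for `stepFn k ∈ Cyl σ`. -/
def cylTest (k : ℕ) (σ : List ℕ) : Bool :=
  ball (fun n => decide ((bif decide (n < k) then 0 else 1) = σ.getD n 0)) σ.length

/-- Decision procedure for `stepFn k ∈ leafSet e`. -/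
def leafTest (k e : ℕ) : Bool :=
  bif decide (e = 0) then false
  else bif decide (e = 1) then true
  else bif decide (e % 2 = 0) then cylTest k (Denumerable.ofNat (List ℕ) (e / 2 - 1))
  else !cylTest k (Denumerable.ofNat (List ℕ) (e / 2 - 1))

theorem cylTest_iff (k : ℕ) (σ : List ℕ) : cylTest k σ = true ↔ stepFn k ∈ Cyl σ := by
  simp [cylTest, ball_iff, Cyl, stepFn, Bool.cond_decide]

theorem leafTest_iff (k e : ℕ) : leafTest k e = true ↔ stepFn k ∈ leafSet e := by
  unfold leafTest leafSet
  by_cases h₀ : e = 0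
  · simp [h₀]
  by_cases h₁ : e = 1
  · simp [h₁]
  by_cases h₂ : e % 2 = 0
  · simp [h₀, h₁, h₂, cylTest_iff]
  · simp only [h₀, h₁, h₂, decide_false, cond_false, if_false, Set.mem_compl_iff, ← cylTest_iff]
    simp

theorem OComp.leafTest {α : Type} [Primcodable α] {K E : (ℕ → ℕ) → α → ℕ} (hK : OComp K)
    (hE : OComp E) : OComp fun A a => leafTest (K A a) (E A a) := by
  have hcyl : OComp fun _ (p : ℕ × List ℕ) => cylTest p.1 p.2 := by
    refine OComp.ball (of_primrec ?_) (of_primrec (Primrec.list_length.comp Primrec.snd))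
    refine (Primrec.eq.decide).comp (Primrec.cond ?_ (Primrec.const 0) (Primrec.const 1)) ?_
    · exact Primrec.nat_lt.decide.comp Primrec.snd (Primrec.fst.comp Primrec.fst)
    · exact (Primrec.list_getD 0).comp (Primrec.snd.comp Primrec.fst) Primrec.snd
  have hc : OComp fun A a => cylTest (K A a) (Denumerable.ofNat (List ℕ) (E A a / 2 - 1)) :=
    hcyl.comp (hK.pair (prim₁ primrec_ofNat_list (prim₁ (Primrec.nat_sub.comp
      (Primrec.nat_div.comp Primrec.id (Primrec.const 2)) (Primrec.const 1)) hE)))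
  have heq : ∀ c : ℕ, OComp fun A a => decide (E A a = c) := fun c =>
    prim₂ Primrec.eq.decide hE (of_primrec (Primrec.const c))
  refine cond (heq 0) (of_primrec (Primrec.const false)) (cond (heq 1)
    (of_primrec (Primrec.const true)) (cond ?_ hc (prim₁ Primrec.not hc)))
  exact prim₂ Primrec.eq.decide (prim₁ (Primrec.nat_mod.comp Primrec.id (Primrec.const 2)) hE)
    (of_primrec (Primrec.const 0))

/-! ### Ordered partitions -/

theorem IsOrderedFn.zero {f : ℕ → ℕ} (hf : IsOrderedFn f) : f 0 = 0 := by
  by_contra h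
  obtain ⟨m, hm, -⟩ := hf 0 _ rfl 0 (Nat.pos_of_ne_zero h)
  exact Nat.not_lt_zero m hm

theorem apply_mu_one {y : ℕ → ℕ} (hy : y ∈ OmegaPart 2) : y (mu y 1) = 1 :=
  Nat.sInf_mem (s := {n | y n = 1}) (hy.2.2 1 (by omega))

theorem mu_one_pos {y : ℕ → ℕ} (hy : y ∈ OmegaPart 2) : 0 < mu y 1 := by
  refine Nat.pos_of_ne_zero fun h => ?_
  have h₁ := apply_mu_one hy
  rw [h, hy.1.zero] at h₁
  omega

theorem apply_of_lt_mu_one {y : ℕ → ℕ} (hy : y ∈ OmegaPart 2) {m : ℕ} (hm : m < mu y 1) :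
    y m = 0 := by
  have h₁ : y m ≠ 1 := fun h => Nat.notMem_of_lt_sInf hm h
  have := hy.2.1 m
  omega

theorem mu_one_eq {y : ℕ → ℕ} {k : ℕ} (hk : y k = 1) (h : ∀ m < k, y m ≠ 1) : mu y 1 = k := by
  refine le_antisymm (Nat.sInf_le hk) (not_lt.1 fun hlt => h _ hlt ?_)
  exact Nat.sInf_mem (s := {n | y n = 1}) ⟨k, hk⟩

theorem mem_omegaPart_two {y : ℕ → ℕ} (h₀ : y 0 = 0) (h₁ : ∀ n, y n < 2) (h₂ : ∃ n, y n = 1) :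
    y ∈ OmegaPart 2 := by
  refine ⟨fun n i hi j hj => ⟨0, Nat.pos_of_ne_zero ?_, ?_⟩, h₁, fun i hi => ?_⟩
  · rintro rfl
    omega
  · have := h₁ n
    omega
  · interval_cases i
    exacts [⟨0, h₀⟩, h₂]

theorem stepFn_mem (k : ℕ) : stepFn (k + 1) ∈ OmegaPart 2 := by
  refine mem_omegaPart_two (by simp [stepFn]) (fun n => ?_) ⟨k + 1, by simp [stepFn]⟩
  unfold stepFn
  split <;> omega

theorem mu_stepFn (k : ℕ) : mu (stepFn k) 1 = k :=
  mu_one_eq (by simp [stepFn]) fun m hm => by simp [stepFn, hm]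

/-! ### Reducing `rDRT` to `Dn2` -/

/-- The coloring of tuples approximating the color of partitions `x` with `μ^x(1) = k + 1`. -/
def toStable (m : ℕ) (A : ℕ → ℕ) (l : List ℕ) : ℕ :=
  bif deltaApprox m (fun t => leafTest (l.headI + 1) (fCode A 0 t))
    (fun t => leafTest (l.headI + 1) (fCode A 1 t)) l.tail then 0 else 1

theorem oComp_leafTest_fCode (i : ℕ) :
    OComp fun A (p : ℕ × List ℕ) => leafTest (p.1 + 1) (fCode A i p.2) := by
  have hE : OComp fun A (p : ℕ × List ℕ) => fCode A i p.2 :=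
    OComp.oracle.comp (OComp.of_primrec
      (Primrec₂.natPair.comp (Primrec.const i) (Primrec.encode.comp Primrec.snd)))
  exact OComp.leafTest (OComp.of_primrec (Primrec.succ.comp Primrec.fst)) hE

theorem oComp_toStable (m : ℕ) :
    OComp fun A n => toStable m A (Denumerable.ofNat (List ℕ) n) := by
  have hd := (OComp.deltaApprox m (R₀ := fun A k t => leafTest (k + 1) (fCode A 0 t))
    (R₁ := fun A k t => leafTest (k + 1) (fCode A 1 t)) (oComp_leafTest_fCode 0)
    (oComp_leafTest_fCode 1)).comp
    (OComp.of_primrec (Primrec.list_headI.pair Primrec.list_tail))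
  have h : OComp fun A (l : List ℕ) => toStable m A l :=
    OComp.cond hd (OComp.of_primrec (Primrec.const 0)) (OComp.of_primrec (Primrec.const 1))
  exact h.comp (OComp.of_primrec primrec_ofNat_list)

/-- The color of a partition `y` is the iterated limit of `toStable` at `μ^y(1) - 1`. -/
theorem iterLim_toStable {m : ℕ} {A : ℕ → ℕ} (hA : (rDRT (m + 2)).inst A) {y : ℕ → ℕ}
    (hy : y ∈ OmegaPart 2) {k : ℕ} (hk : mu y 1 = k + 1) :
    ∃ v ≤ 1, IterLim (m + 1) (fun l => toStable m A (k :: l)) v ∧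
      NFEval (m + 2) true (fCode A v) y := by
  have hconv : ∀ i, NFEval (m + 2) true (fCode A i) (stepFn (k + 1)) ↔
      AltQuant (m + 2) true fun t => leafTest (k + 1) (fCode A i t) = true := fun i => by
    simp only [nfEval_iff, leafTest_iff]
  have hs := stepFn_mem k
  have hlim := iterEventually_deltaApprox m (fun t => leafTest (k + 1) (fCode A 0 t))
    (fun t => leafTest (k + 1) (fCode A 1 t)) (by rw [← hconv, ← hconv]; exact hA.1 _ hs)
  rw [← hconv] at hlim
  have hsame := hA.2 y hy _ hs (by rw [hk, mu_stepFn])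
  by_cases h : NFEval (m + 2) true (fCode A 0) y
  · refine ⟨0, by omega, (iterLim_iff _ _ _).2 (hlim.mono fun l hl => ?_), h⟩
    simp [toStable, hl.2 (hsame.1 h)]
  · refine ⟨1, le_rfl, (iterLim_iff _ _ _).2 (hlim.mono fun l hl => ?_),
      not_not.1 (mt (hA.1 y hy).2 h)⟩
    have hf := mt hl.1 (mt hsame.2 h)
    simp [toStable, Bool.eq_false_iff.2 hf]

/-- The partition whose nonzero blocks are the singletons `{k + 1}` with `L k = 1`. -/
def blockPart (L : ℕ → ℕ) (n : ℕ) : ℕ :=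
  bif decide (0 < n) && decide (L (n - 1) = 1) then Nat.count (fun k => L k = 1) n else 0

theorem oComp_blockPart : OComp blockPart := by
  have hmem : ∀ {α : Type} [Primcodable α] {K : (ℕ → ℕ) → α → ℕ}, OComp K →
      OComp fun L a => decide (L (K L a) = 1) := fun hK =>
    OComp.prim₂ Primrec.eq.decide (OComp.oracle.comp hK) (OComp.of_primrec (Primrec.const 1))
  have hcount : OComp fun L n => Nat.count (fun k => L k = 1) n := by
    have := (OComp.nat_rec (OComp.of_primrec (Primrec.const 0))
      (OComp.prim₂ Primrec.nat_add (OComp.of_primrec (Primrec.snd.comp Primrec.snd))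
        (OComp.cond (hmem (OComp.of_primrec (Primrec.fst.comp Primrec.snd)))
          (OComp.of_primrec (Primrec.const 1)) (OComp.of_primrec (Primrec.const 0))) :
        OComp fun L (p : ℕ × ℕ × ℕ) => p.2.2 + bif decide (L p.2.1 = 1) then 1 else 0)).comp
      (OComp.of_primrec (Primrec.id.pair Primrec.id))
    convert this using 3 with L n
    induction n with
    | zero => rfl
    | succ n ih => simp [Nat.count_succ, ih, Bool.cond_decide]
  exact OComp.cond (OComp.prim₂ Primrec.and
    (OComp.of_primrec (Primrec.nat_lt.decide.comp (Primrec.const 0) Primrec.id))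
    (hmem (OComp.of_primrec Primrec.pred))) hcount (OComp.of_primrec (Primrec.const 0))

theorem blockPart_zero (L : ℕ → ℕ) : blockPart L 0 = 0 := rfl

theorem blockPart_succ (L : ℕ → ℕ) (k : ℕ) :
    blockPart L (k + 1) = if L k = 1 then Nat.count (fun k => L k = 1) k + 1 else 0 := by
  by_cases h : L k = 1 <;> simp [blockPart, Nat.count_succ, h]

theorem blockPart_mem {L : ℕ → ℕ} (hL : {k | L k = 1}.Infinite) : blockPart L ∈ OmegaPartInf := by
  have hnth : ∀ j, blockPart L (Nat.nth (fun k => L k = 1) j + 1) = j + 1 := fun j => by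
    rw [blockPart_succ, if_pos (Nat.nth_mem_of_infinite hL j), Nat.count_nth_of_infinite hL]
  constructor
  · rintro (_ | n) i hi j hj
    · rw [blockPart_zero] at hi
      omega
    · rcases j with _ | j
      · exact ⟨0, by omega, rfl⟩
      · refine ⟨_, ?_, hnth j⟩
        rw [blockPart_succ] at hi
        split at hi
        · exact Nat.succ_lt_succ (Nat.nth_lt_of_lt_count (by omega))
        · omega
  · rintro (_ | j)
    exacts [⟨0, rfl⟩, ⟨_, hnth j⟩]

theorem exists_mu_eq_of_coarsening_blockPart {L y : ℕ → ℕ} (hy : y ∈ Coarsenings (blockPart L) 2) :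
    ∃ k, L k = 1 ∧ mu y 1 = k + 1 := by
  obtain ⟨k, hk⟩ := Nat.exists_eq_succ_of_ne_zero (mu_one_pos hy.1).ne'
  refine ⟨k, by_contra fun h => ?_, hk⟩
  have h₁ : y (k + 1) = y 0 := hy.2 _ _ (by rw [blockPart_succ, if_neg h, blockPart_zero])
  have h₂ := apply_mu_one hy.1
  rw [hk, Nat.succ_eq_add_one, h₁, hy.1.1.zero] at h₂
  omega

theorem rDRT_red_Dn2 (m : ℕ) : StrongWeihrauchRed (rDRT (m + 2)) (Dn2 (m + 2)) := by
  obtain ⟨Φ, hΦ⟩ := (oComp_toStable m).exists_code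
  obtain ⟨Ψ, hΨ⟩ := oComp_blockPart.exists_code
  have hofNat : ∀ A : ℕ → ℕ, ∀ k v, (IterLim (m + 2 - 1) (fun l => toStable m A
      (Denumerable.ofNat (List ℕ) (Encodable.encode (k :: l)))) v ↔
      IterLim (m + 1) (fun l => toStable m A (k :: l)) v) := fun A k v => by
    simp only [Denumerable.ofNat_encode, Nat.add_succ_sub_one]
  refine ⟨Φ, Ψ, fun A hA => ⟨_, hΦ A, ⟨fun n => ?_, fun k => ?_⟩, ?_⟩⟩
  · simp only [toStable, Bool.cond_eq_ite]
    split <;> omega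
  · obtain ⟨v, -, hv, -⟩ := iterLim_toStable hA (stepFn_mem k) (mu_stepFn (k + 1))
    exact ⟨v, (hofNat A k v).2 hv⟩
  · rintro L ⟨hL, i, hi, hlim⟩
    refine ⟨_, hΨ L, blockPart_mem hL, i, hi, fun y hy => ?_⟩
    obtain ⟨k, hk, hmu⟩ := exists_mu_eq_of_coarsening_blockPart hy
    obtain ⟨v, -, hv, hcol⟩ := iterLim_toStable hA hy.1 hmu
    rwa [((hofNat A k i).1 (hlim k hk)).unique hv]

/-! ### Reducing `Dn2` to `rDRT` -/

/-- Decode a tuple of quantified variables, each coding an offset and the next threshold, into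
the tuple of thresholds plus offsets. -/
def offsets : ℕ → List ℕ → List ℕ
  | _, [] => []
  | M, t :: l => (M + t.unpair.1) :: offsets t.unpair.2 l

theorem primrec_offsets : Primrec (offsets 0) := by
  let step : ℕ × List ℕ → ℕ → ℕ × List ℕ := fun p t => (t.unpair.2, p.2 ++ [p.1 + t.unpair.1])
  have hfold : ∀ (l : List ℕ) (p : ℕ × List ℕ), (l.foldl step p).2 = p.2 ++ offsets p.1 l := by
    intro l
    induction l with
    | nil => simp [offsets]
    | cons t l ih => intro p; simp [ih, step, offsets]
  have hstep : Primrec₂ fun (_ : List ℕ) (q : (ℕ × List ℕ) × ℕ) => step q.1 q.2 := by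
    have hp : Primrec fun q : List ℕ × (ℕ × List ℕ) × ℕ => q.2.1 := Primrec.fst.comp Primrec.snd
    have ht : Primrec fun q : List ℕ × (ℕ × List ℕ) × ℕ => q.2.2.unpair :=
      Primrec.unpair.comp (Primrec.snd.comp Primrec.snd)
    exact (Primrec.snd.comp ht).pair (Primrec.list_concat.comp (Primrec.snd.comp hp)
      (Primrec.nat_add.comp (Primrec.fst.comp hp) (Primrec.fst.comp ht)))
  refine (Primrec.snd.comp (Primrec.list_foldl Primrec.id (Primrec.const (0, [])) hstep)).of_eq
    fun l => ?_
  simpa using hfold l (0, [])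

/-- An iterated limit, when it exists, is expressed by both forms of alternating quantifiers. -/
theorem altQuant_offsets (m : ℕ) {g : List ℕ → ℕ} {v : ℕ} (hg : IterLim m g v) (i : ℕ) :
    ((∃ M, AltQuant m false fun t => g (offsets M t) = i) ↔ i = v) ∧
      ((∀ M, AltQuant m true fun t => g (offsets M t) = i) ↔ i = v) := by
  induction m generalizing g with
  | zero =>
    have hg : g [] = v := hg
    simp [AltQuant, offsets, hg, eq_comm]
  | succ m ih =>
    obtain ⟨N, hN⟩ := hg
    constructor
    · constructor
      · rintro ⟨M, hM⟩
        refine (ih (hN (M + N) (by omega))).2.1 fun M' => ?_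
        simpa [offsets] using hM (Nat.pair N M')
      · intro hi
        exact ⟨N, fun t => by
          simpa [offsets] using (ih (hN (N + t.unpair.1) (by omega))).2.2 hi t.unpair.2⟩
    · constructor
      · intro h
        obtain ⟨t, ht⟩ := h N
        exact (ih (hN (N + t.unpair.1) (by omega))).1.1
          ⟨t.unpair.2, by simpa [offsets] using ht⟩
      · intro hi M
        obtain ⟨M', hM'⟩ := (ih (hN (M + N) (by omega))).1.2 hi
        exact ⟨Nat.pair N M', by simpa [offsets] using hM'⟩

/-- The leaf label for the cylinder `[0^k 1]`. -/
def stepLabel (k : ℕ) : ℕ := 2 * (Encodable.encode ((List.range k).map (fun _ => 0) ++ [1]) + 1)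

theorem primrec_stepLabel : Primrec stepLabel :=
  Primrec.nat_mul.comp (Primrec.const 2) (Primrec.succ.comp (Primrec.encode.comp
    (Primrec.list_concat.comp (Primrec.list_map Primrec.list_range (Primrec.const 0).to₂)
      (Primrec.const 1))))

theorem mem_leafSet_stepLabel {x : ℕ → ℕ} (hx : x ∈ OmegaPart 2) (k : ℕ) :
    x ∈ leafSet (stepLabel k) ↔ k = mu x 1 := by
  have hlabel : leafSet (stepLabel k) = Cyl ((List.range k).map (fun _ => 0) ++ [1]) := by
    unfold leafSet stepLabel
    rw [if_neg (by omega), if_neg (by omega), if_pos (by omega), Nat.mul_div_cancel_left _ two_pos,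
      Nat.add_sub_cancel, Denumerable.ofNat_encode]
  have hlt : ∀ n < k, ((List.range k).map (fun _ => 0) ++ [1]).getD n 0 = 0 := fun n hn => by
    rw [List.getD_append _ _ _ _ (by simpa using hn)]
    simp [List.getD_eq_getElem?_getD, hn]
  have hk : ((List.range k).map (fun _ => 0) ++ [1]).getD k 0 = 1 := by
    rw [List.getD_append_right _ _ _ _ (by simp)]
    simp
  rw [hlabel]
  constructor
  · intro h
    refine (mu_one_eq ((h k (by simp)).trans hk) fun n hn => ?_).symm
    rw [h n (by simp; omega), hlt n hn]
    omega
  · rintro rfl n hn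
    rcases Nat.lt_succ_iff_lt_or_eq.1 (by simpa using hn) with h | rfl
    · rw [hlt n h, apply_of_lt_mu_one hx h]
    · rw [hk, apply_mu_one hx]

/-- The leaf label at the tuple `t` of the code for `{x | lim A(μ^x(1), …) = i}`. -/
def limLabel (A : ℕ → ℕ) (i : ℕ) (t : List ℕ) : ℕ :=
  bif decide (A (Encodable.encode (offsets 0 t)) = i) then stepLabel (offsets 0 t).headI else 0

/-- The pair of Borel codes, as a single function, associated with a stable coloring. -/
def toCodes (A : ℕ → ℕ) (n : ℕ) : ℕ :=
  limLabel A n.unpair.1 (Denumerable.ofNat (List ℕ) n.unpair.2)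

theorem fCode_toCodes (A : ℕ → ℕ) (i : ℕ) : fCode (toCodes A) i = limLabel A i := by
  funext l
  simp [fCode, toCodes]

theorem oComp_toCodes : OComp toCodes := by
  have ht : OComp fun _ (n : ℕ) => offsets 0 (Denumerable.ofNat (List ℕ) n.unpair.2) :=
    OComp.of_primrec (primrec_offsets.comp (primrec_ofNat_list.comp
      (Primrec.snd.comp Primrec.unpair)))
  exact OComp.cond (OComp.prim₂ Primrec.eq.decide
      (OComp.oracle.comp (OComp.prim₁ Primrec.encode ht))
      (OComp.of_primrec (Primrec.fst.comp Primrec.unpair)))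
    (OComp.prim₁ (primrec_stepLabel.comp Primrec.list_headI) ht)
    (OComp.of_primrec (Primrec.const 0))

theorem nfEval_toCodes {m : ℕ} {A x : ℕ → ℕ} {v : ℕ} (hx : x ∈ OmegaPart 2)
    (hv : IterLim m (fun l => A (Encodable.encode (mu x 1 :: l))) v) (i : ℕ) :
    NFEval (m + 1) true (fCode (toCodes A) i) x ↔ i = v := by
  have hleaf : ∀ k M l, x ∈ leafSet (limLabel A i (Nat.pair k M :: l)) ↔
      k = mu x 1 ∧ A (Encodable.encode (k :: offsets M l)) = i := fun k M l => by
    by_cases h : A (Encodable.encode (k :: offsets M l)) = i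
    · simp only [limLabel, offsets, Nat.unpair_pair, Nat.zero_add, h, decide_true, cond_true,
        List.headI_cons, mem_leafSet_stepLabel hx, and_true]
    · simp only [limLabel, offsets, Nat.unpair_pair, Nat.zero_add, h, decide_false, cond_false,
        and_false, leafSet, if_true, Set.mem_empty_iff_false]
  rw [fCode_toCodes, nfEval_iff, ← (altQuant_offsets m hv i).1]
  constructor
  · rintro ⟨t, ht⟩
    rw [← Nat.pair_unpair t] at ht
    simp only [hleaf] at ht
    by_cases hk : t.unpair.1 = mu x 1
    · exact ⟨t.unpair.2, by simpa [hk] using ht⟩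
    · simp only [hk, false_and] at ht
      exact absurd ht (not_altQuant_false _ _)
  · rintro ⟨M, hM⟩
    exact ⟨Nat.pair (mu x 1) M, by simpa only [hleaf, true_and] using hM⟩

/-- The characteristic function of the set of minima of the nonzero blocks. -/
def blockMins (x : ℕ → ℕ) (k : ℕ) : ℕ :=
  bif decide (0 < k) && ball (fun j => !decide (x j = x k)) k then 1 else 0

theorem oComp_blockMins : OComp blockMins :=
  OComp.cond (OComp.prim₂ Primrec.and
      (OComp.of_primrec (Primrec.nat_lt.decide.comp (Primrec.const 0) Primrec.id))
      (OComp.ball (OComp.prim₁ Primrec.not (OComp.prim₂ Primrec.eq.decide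
        (OComp.oracle.comp (OComp.of_primrec Primrec.snd))
        (OComp.oracle.comp (OComp.of_primrec Primrec.fst)))) (OComp.of_primrec Primrec.id)))
    (OComp.of_primrec (Primrec.const 1)) (OComp.of_primrec (Primrec.const 0))

theorem blockMins_eq_one {x : ℕ → ℕ} {k : ℕ} :
    blockMins x k = 1 ↔ 0 < k ∧ ∀ j < k, x j ≠ x k := by
  have h : (decide (0 < k) && ball (fun j => !decide (x j = x k)) k) = true ↔
      0 < k ∧ ∀ j < k, x j ≠ x k := by
    simp [ball_iff]
  rw [← h, blockMins]
  cases decide (0 < k) && ball (fun j => !decide (x j = x k)) k <;> simp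

theorem infinite_blockMins {x : ℕ → ℕ} (hx : x ∈ OmegaPartInf) :
    {k | blockMins x k = 1}.Infinite := by
  classical
  have hfirst : ∀ i, ∃ k, x k = i + 1 ∧ blockMins x k = 1 := fun i => by
    have hk := Nat.find_spec (hx.2 (i + 1))
    refine ⟨_, hk, blockMins_eq_one.2 ⟨Nat.pos_of_ne_zero fun h => ?_, fun j hj h => ?_⟩⟩
    · rw [h, hx.1.zero] at hk
      omega
    · exact Nat.find_min (hx.2 (i + 1)) hj (h.trans hk)
  choose k hk hmin using hfirst
  refine Set.infinite_of_injective_forall_mem (f := k) (fun i j hij => ?_) hmin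
  have h := hk i
  rw [hij, hk j] at h
  omega

theorem exists_coarsening_of_blockMins {x : ℕ → ℕ} {k : ℕ}
    (hk : blockMins x k = 1) : ∃ y ∈ Coarsenings x 2, mu y 1 = k := by
  obtain ⟨hpos, hne⟩ := blockMins_eq_one.1 hk
  refine ⟨fun n => if x n = x k then 1 else 0, ⟨mem_omegaPart_two ?_ (fun n => ?_) ⟨k, ?_⟩,
    fun n m h => ?_⟩, mu_one_eq ?_ fun j hj => ?_⟩
  · simp [hne 0 hpos]
  · split <;> omega
  · simp
  · simp [h]
  · simp
  · simp [hne j hj]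

theorem Dn2_red_rDRT (m : ℕ) : StrongWeihrauchRed (Dn2 (m + 1)) (rDRT (m + 1)) := by
  obtain ⟨Φ, hΦ⟩ := oComp_toCodes.exists_code
  obtain ⟨Ψ, hΨ⟩ := oComp_blockMins.exists_code
  refine ⟨Φ, Ψ, fun A hA => ?_⟩
  have hlim : ∀ k, ∃ v, IterLim m (fun l => A (Encodable.encode (k :: l))) v := hA.2
  refine ⟨_, hΦ A, ⟨fun x hx => ?_, fun x hx y hy hxy => ?_⟩, ?_⟩
  · obtain ⟨v, hv⟩ := hlim (mu x 1)
    rw [nfEval_toCodes hx hv, nfEval_toCodes hx hv]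
    obtain ⟨l, hl⟩ := ((iterLim_iff _ _ _).1 hv).exists_of
    have hle := hA.1 (Encodable.encode (mu x 1 :: l))
    rw [hl] at hle
    omega
  · obtain ⟨v, hv⟩ := hlim (mu x 1)
    rw [nfEval_toCodes hx hv, nfEval_toCodes hy (hxy ▸ hv)]
  · rintro x ⟨hx, i, hi, hcol⟩
    refine ⟨_, hΨ x, infinite_blockMins hx, i, hi, fun k hk => ?_⟩
    obtain ⟨y, hy, hmu⟩ := exists_coarsening_of_blockMins hk
    obtain ⟨v, hv⟩ := hlim k
    rwa [(nfEval_toCodes hy.1 (hmu ▸ hv) i).1 (hcol y hy)]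

/-- `Δ^0_n`-`rDRT^2_2` is strongly Weihrauch equivalent to `D^n_2`. -/
theorem stmt14 (n : ℕ) (hn : 2 ≤ n) :
    StrongWeihrauchRed (rDRT n) (Dn2 n) ∧ StrongWeihrauchRed (Dn2 n) (rDRT n) := by
  obtain ⟨m, rfl⟩ := Nat.exists_eq_add_of_le' hn
  exact ⟨rDRT_red_Dn2 m, Dn2_red_rDRT (m + 1)⟩
end
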